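/- Let k be an algebraically closed field of characteristic zero, let Δ be trinomial data over k with unit partition, let B be a k-algebra isomorphic to a polynomial ring k[x_1,…,x_m] for some m ≥ 2, and let A ⊆ B be a factorially closed k-subalgebra isomorphic to k[Δ]. Then A is isomorphic as a k-algebra to a polynomial ring in two variables over k. -/

import Mathlib

open MvPolynomial

/-- Trinomial data over `k` with unit partition: pairwise relatively prime positive integers
`β_0, …, β_r` (`r ≥ 1`) and distinct scalars `λ_2, …, λ_r ∈ k^*`; the associated ring is
`k[T_0, …, T_r]/(T_0^{β_0} + λ_i T_1^{β_1} + T_i^{β_i} : 2 ≤ i ≤ r)`. -/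
structure MoriData (k : Type*) [Field k] where
  /-- the number of variables minus one -/
  r : ℕ
  one_le_r : 1 ≤ r
  /-- the exponents `β_i` -/
  β : Fin (r + 1) → ℕ
  β_pos : ∀ i, 0 < β i
  coprime : ∀ i j, i ≠ j → Nat.Coprime (β i) (β j)
  /-- the scalars `λ_i` (only the values for `2 ≤ i` are relevant) -/
  lam : Fin (r + 1) → k
  lam_ne_zero : ∀ i : Fin (r + 1), 2 ≤ (i : ℕ) → lam i ≠ 0
  lam_injOn : ∀ i j : Fin (r + 1), 2 ≤ (i : ℕ) → 2 ≤ (j : ℕ) → lam i = lam j → i = j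

variable {k : Type*} [Field k]

/-- The ring `k[Δ]` associated to trinomial data `Δ` with unit partition. -/
noncomputable abbrev MoriData.Ring (Δ : MoriData k) : Type _ :=
  MvPolynomial (Fin (Δ.r + 1)) k ⧸
    (Ideal.span {p | ∃ i : Fin (Δ.r + 1), 2 ≤ (i : ℕ) ∧
      p = X 0 ^ Δ.β 0 + C (Δ.lam i) * X 1 ^ Δ.β 1 + X i ^ Δ.β i} :
      Ideal (MvPolynomial (Fin (Δ.r + 1)) k))

/-- `Δ` is in Mori form if either `r = 1` and `β_0 = β_1 = 1`, or `r ≥ 2`, `λ_2 = 1` and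
`β_0 > β_1 > ⋯ > β_r ≥ 2`. -/
def MoriData.MoriForm (Δ : MoriData k) : Prop :=
  (Δ.r = 1 ∧ Δ.β 0 = 1 ∧ Δ.β 1 = 1) ∨
  (2 ≤ Δ.r ∧ (∀ i : Fin (Δ.r + 1), (i : ℕ) = 2 → Δ.lam i = 1) ∧
    (∀ i j : Fin (Δ.r + 1), i < j → Δ.β j < Δ.β i) ∧
    (∀ i : Fin (Δ.r + 1), (i : ℕ) = Δ.r → 2 ≤ Δ.β i))

/-!
Suppose three of the exponents were at least `2`. Each generator of `k[Δ]` with exponent at least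
`2` is irreducible, and factorial closedness carries three such generators to pairwise
non-associated irreducibles `x, y, z` of a polynomial ring with `α xᵃ + β yᵇ + γ zᶜ = 0` and
`α, β, γ ∈ kˣ`. After a translation none of them vanishes at the origin, and restriction to the
generic line through the origin preserves irreducibility and coprimality while making them
polynomials in one variable over a field.

* If `1/a + 1/b + 1/c ≤ 1`, the Mason–Stothers theorem says that they are constant.
* Otherwise `{a, b, c} = {2, 3, 5}`, and `x² + y³ = 1728 z⁵` after rescaling. Klein's icosahedral
  forms parametrise this surface by the plane. By Hensel's lemma the solution `(x, y, z)` lifts to a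
  pair `u` of power series. The parametrisation is unramified away from the origin, so at every
  valuation trivial on the constants the derivatives of `u` satisfy Cauchy estimates. A derivative
  of high order is then integral at all of them, hence constant, and `u` is polynomial. So `z` is
  the value at `u` of the vertex form, a product of linear forms, and cannot be irreducible.

So at most two exponents exceed `1`. Every other generator has exponent `1` and is eliminated by its
own relation, which leaves a polynomial ring in two variables.
-/

/-! ### Klein's icosahedral forms -/

section BinaryForms

variable {R : Type*} [CommRing R]

theorem isHomogeneous_C_mul_X_pow_mul_X_pow (c : R) {a b d : ℕ} (h : a + b = d) :
    (C c * X 0 ^ a * X 1 ^ b : MvPolynomial (Fin 2) R).IsHomogeneous d :=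
  h ▸ (isHomogeneous_C_mul_X_pow c 0 a).mul (isHomogeneous_X_pow 1 b)

/-- The Jacobian determinant of a pair of polynomials in two variables. -/
noncomputable def jacobian (P Q : MvPolynomial (Fin 2) R) : MvPolynomial (Fin 2) R :=
  pderiv 0 P * pderiv 1 Q - pderiv 1 P * pderiv 0 Q

end BinaryForms

section IcosahedralForms

/-- Klein's icosahedral form of degree `12`, whose zeros are the vertices of the icosahedron. -/
noncomputable def vertexForm : MvPolynomial (Fin 2) ℤ :=
  X 0 ^ 11 * X 1 + C 11 * X 0 ^ 6 * X 1 ^ 6 - X 0 * X 1 ^ 11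

/-- Klein's icosahedral form of degree `20`, whose zeros are the face centres; a scalar multiple
of the Hessian of `vertexForm`. -/
noncomputable def faceForm : MvPolynomial (Fin 2) ℤ :=
  -X 0 ^ 20 + C 228 * X 0 ^ 15 * X 1 ^ 5 - C 494 * X 0 ^ 10 * X 1 ^ 10
    - C 228 * X 0 ^ 5 * X 1 ^ 15 - X 1 ^ 20

/-- Klein's icosahedral form of degree `30`, whose zeros are the edge midpoints; a scalar multiple
of the Jacobian of `vertexForm` and `faceForm`. -/
noncomputable def edgeForm : MvPolynomial (Fin 2) ℤ :=
  X 0 ^ 30 + C 522 * X 0 ^ 25 * X 1 ^ 5 - C 10005 * X 0 ^ 20 * X 1 ^ 10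
    - C 10005 * X 0 ^ 10 * X 1 ^ 20 - C 522 * X 0 ^ 5 * X 1 ^ 25 + X 1 ^ 30

theorem isHomogeneous_vertexForm : vertexForm.IsHomogeneous 12 := by
  have hleft := isHomogeneous_C_mul_X_pow_mul_X_pow (1 : ℤ) (show 11 + 1 = 12 from rfl)
  have hright := isHomogeneous_C_mul_X_pow_mul_X_pow (1 : ℤ) (show 1 + 11 = 12 from rfl)
  simp only [map_one, one_mul, pow_one] at hleft hright
  exact (hleft.add (isHomogeneous_C_mul_X_pow_mul_X_pow 11 rfl)).sub hright

theorem isHomogeneous_faceForm : faceForm.IsHomogeneous 20 :=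
  (((((isHomogeneous_X_pow 0 20).neg.add (isHomogeneous_C_mul_X_pow_mul_X_pow 228 rfl)).sub
    (isHomogeneous_C_mul_X_pow_mul_X_pow 494 rfl)).sub
      (isHomogeneous_C_mul_X_pow_mul_X_pow 228 rfl)).sub (isHomogeneous_X_pow 1 20))

theorem isHomogeneous_edgeForm : edgeForm.IsHomogeneous 30 :=
  ((((((isHomogeneous_X_pow 0 30).add (isHomogeneous_C_mul_X_pow_mul_X_pow 522 rfl)).sub
    (isHomogeneous_C_mul_X_pow_mul_X_pow 10005 rfl)).sub
      (isHomogeneous_C_mul_X_pow_mul_X_pow 10005 rfl)).sub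
        (isHomogeneous_C_mul_X_pow_mul_X_pow 522 rfl)).add (isHomogeneous_X_pow 1 30))

theorem edgeForm_sq_add_faceForm_cube :
    edgeForm ^ 2 + faceForm ^ 3 = 1728 * vertexForm ^ 5 := by
  simp only [edgeForm, faceForm, vertexForm, map_ofNat]
  ring

theorem jacobian_vertexForm_edgeForm : jacobian vertexForm edgeForm = -30 * faceForm ^ 2 := by
  simp only [jacobian, vertexForm, edgeForm, map_add, map_sub, pderiv_C,
    Derivation.leibniz, Derivation.leibniz_pow, pderiv_X_self, pderiv_X_of_ne zero_ne_one,
    pderiv_X_of_ne one_ne_zero]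
  simp only [faceForm, smul_eq_mul, nsmul_eq_mul, map_ofNat, Nat.cast_ofNat]
  ring

theorem jacobian_faceForm_edgeForm : jacobian faceForm edgeForm = -86400 * vertexForm ^ 4 := by
  simp only [jacobian, faceForm, edgeForm, map_add, map_sub, map_neg, pderiv_C,
    Derivation.leibniz, Derivation.leibniz_pow, pderiv_X_self, pderiv_X_of_ne zero_ne_one,
    pderiv_X_of_ne one_ne_zero]
  simp only [vertexForm, smul_eq_mul, nsmul_eq_mul, map_ofNat, Nat.cast_ofNat]
  ring

theorem three_mul_vertexForm_mul_pderiv_faceForm :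
    3 * vertexForm * pderiv 1 faceForm =
      5 * X 0 * edgeForm + 5 * pderiv 1 vertexForm * faceForm := by
  simp only [faceForm, vertexForm, map_add, map_sub, map_neg, pderiv_C,
    Derivation.leibniz, Derivation.leibniz_pow, pderiv_X_self, pderiv_X_of_ne zero_ne_one]
  simp only [edgeForm, smul_eq_mul, nsmul_eq_mul, map_ofNat, Nat.cast_ofNat]
  ring

theorem exists_isHomogeneous_combination_eq_X_pow (i : Fin 2) :
    ∃ A B : MvPolynomial (Fin 2) ℤ, A.IsHomogeneous 19 ∧ B.IsHomogeneous 11 ∧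
      3125 * X i ^ 31 = A * vertexForm + B * faceForm := by
  -- The symmetry `(X 0, X 1) ↦ (X 1, -X 0)` of the icosahedron exchanges the two cases.
  fin_cases i
  · refine ⟨C 679478 * X 0 ^ 15 * X 1 ^ 4 - C 1485989 * X 0 ^ 10 * X 1 ^ 9
        - C 684695 * X 0 ^ 5 * X 1 ^ 14 - C 3003 * X 0 ^ 0 * X 1 ^ 19,
      C (-3125) * X 0 ^ 11 * X 1 ^ 0 - C 33022 * X 0 ^ 6 * X 1 ^ 5 + C 3003 * X 0 ^ 1 * X 1 ^ 10,
      ?_, ?_, ?_⟩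
    · repeat' first | exact isHomogeneous_C_mul_X_pow_mul_X_pow _ rfl | apply IsHomogeneous.sub
    · repeat' first
        | exact isHomogeneous_C_mul_X_pow_mul_X_pow _ rfl
        | apply IsHomogeneous.sub
        | apply IsHomogeneous.add
    · simp only [vertexForm, faceForm, map_ofNat, map_neg, Fin.zero_eta]
      ring
  · refine ⟨C 679478 * X 0 ^ 4 * X 1 ^ 15 + C 1485989 * X 0 ^ 9 * X 1 ^ 10
        - C 684695 * X 0 ^ 14 * X 1 ^ 5 + C 3003 * X 0 ^ 19 * X 1 ^ 0,
      C (-3125) * X 0 ^ 0 * X 1 ^ 11 + C 33022 * X 0 ^ 5 * X 1 ^ 6 + C 3003 * X 0 ^ 10 * X 1 ^ 1,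
      ?_, ?_, ?_⟩
    · repeat' first
        | exact isHomogeneous_C_mul_X_pow_mul_X_pow _ rfl
        | apply IsHomogeneous.sub
        | apply IsHomogeneous.add
    · repeat' first | exact isHomogeneous_C_mul_X_pow_mul_X_pow _ rfl | apply IsHomogeneous.add
    · simp only [vertexForm, faceForm, map_ofNat, map_neg, Fin.mk_one]
      ring

end IcosahedralForms

/-! ### Derivations with Cauchy estimates -/

theorem derivation_aeval_eq_sum_pderiv {R S σ : Type*} [CommRing R] [CommRing S] [Algebra R S]
    [Fintype σ] (D : Derivation R S S) (w : σ → S) (P : MvPolynomial σ R) :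
    D (aeval w P) = ∑ i, aeval w (pderiv i P) * D (w i) := by
  classical
  induction P using MvPolynomial.induction_on with
  | C a => simp
  | add P Q hP hQ => simp [hP, hQ, add_mul, Finset.sum_add_distrib]
  | mul_X P i hP =>
    simp [hP, pderiv_X, Pi.single_apply, add_mul, Finset.sum_add_distrib, Finset.mul_sum,
      mul_assoc, apply_ite]

theorem valuation_intCast_le_one {S Γ₀ : Type*} [CommRing S] [LinearOrderedCommGroupWithZero Γ₀]
    (ν : Valuation S Γ₀) (m : ℤ) : ν m ≤ 1 :=
  intCast_mem ν.integer m

section DerivBound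

variable {S Γ₀ : Type*} [CommRing S] [LinearOrderedCommGroupWithZero Γ₀]

/-- The first `n` iterated derivatives of `w` obey the Cauchy-type estimates
`ν (Dⁱ w) ≤ c τ⁻ⁱ` of a function bounded by `c` on a disc of radius `τ`. -/
def DerivBound (ν : Valuation S Γ₀) (D : Derivation ℤ S S) (τ : Γ₀) (n : ℕ) (c : Γ₀) (w : S) :
    Prop :=
  ∀ i ≤ n, ν (D^[i] w) ≤ c * τ⁻¹ ^ i

variable {ν : Valuation S Γ₀} {D : Derivation ℤ S S} {τ c c' : Γ₀} {n : ℕ} {w w' : S}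

theorem derivBound_zero_iff : DerivBound ν D τ 0 c w ↔ ν w ≤ c := by
  simp [DerivBound]

theorem derivBound_succ_iff :
    DerivBound ν D τ (n + 1) c w ↔ ν w ≤ c ∧ DerivBound ν D τ n (c * τ⁻¹) (D w) := by
  refine ⟨fun h ↦ ⟨by simpa using h 0 (n + 1).zero_le, fun i hi ↦ ?_⟩, ?_⟩
  · simpa [pow_succ', mul_assoc] using h (i + 1) (Nat.succ_le_succ hi)
  · rintro ⟨h₀, h⟩ (_ | i) hi
    · simpa using h₀
    · simpa [pow_succ', mul_assoc] using h i (Nat.le_of_succ_le_succ hi)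

namespace DerivBound

theorem le (h : DerivBound ν D τ n c w) : ν w ≤ c := by
  simpa using h 0 n.zero_le

theorem of_le {m : ℕ} (h : DerivBound ν D τ n c w) (hmn : m ≤ n) : DerivBound ν D τ m c w :=
  fun i hi ↦ h i (hi.trans hmn)

theorem mono (h : DerivBound ν D τ n c w) (hc : c ≤ c') : DerivBound ν D τ n c' w :=
  fun i hi ↦ (h i hi).trans (by gcongr)

theorem add (h : DerivBound ν D τ n c w) (h' : DerivBound ν D τ n c w') :
    DerivBound ν D τ n c (w + w') := fun i hi ↦ by
  rw [iterate_map_add]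
  exact ν.map_add_le (h i hi) (h' i hi)

theorem neg (h : DerivBound ν D τ n c w) : DerivBound ν D τ n c (-w) := fun i hi ↦ by
  rw [iterate_map_neg, Valuation.map_neg]
  exact h i hi

theorem sub (h : DerivBound ν D τ n c w) (h' : DerivBound ν D τ n c w') :
    DerivBound ν D τ n c (w - w') :=
  sub_eq_add_neg w w' ▸ h.add h'.neg

theorem of_derivation_eq_zero (h : ν w ≤ c) (hD : D w = 0) : DerivBound ν D τ n c w := by
  rintro (_ | i) -
  · simpa using h
  · simp [hD]

theorem mul (h : DerivBound ν D τ n c w) (h' : DerivBound ν D τ n c' w') :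
    DerivBound ν D τ n (c * c') (w * w') := by
  induction n generalizing c c' w w' with
  | zero =>
    rw [derivBound_zero_iff] at h h' ⊢
    rw [map_mul]
    gcongr
  | succ n ih =>
    refine derivBound_succ_iff.2 ⟨?_, ?_⟩
    · rw [map_mul]
      exact mul_le_mul' h.le h'.le
    · rw [D.leibniz, smul_eq_mul, smul_eq_mul]
      refine .add ?_ ?_
      · rw [mul_assoc]
        exact ih (h.of_le n.le_succ) (derivBound_succ_iff.1 h').2
      · rw [mul_comm c, mul_assoc]
        exact ih (h'.of_le n.le_succ) (derivBound_succ_iff.1 h).2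

theorem pow (h : DerivBound ν D τ n c w) (d : ℕ) : DerivBound ν D τ n (c ^ d) (w ^ d) := by
  induction d with
  | zero => simpa using of_derivation_eq_zero (map_one ν).le D.map_one_eq_zero
  | succ d ih => simpa [pow_succ] using ih.mul h

theorem sum {ι : Type*} {s : Finset ι} {f : ι → S} (h : ∀ i ∈ s, DerivBound ν D τ n c (f i)) :
    DerivBound ν D τ n c (∑ i ∈ s, f i) :=
  Finset.sum_induction f _ (fun _ _ ↦ add) (of_derivation_eq_zero (by simp) (map_zero D)) h

theorem prod {ι : Type*} {s : Finset ι} {f : ι → S} {c : ι → Γ₀}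
    (h : ∀ i ∈ s, DerivBound ν D τ n (c i) (f i)) :
    DerivBound ν D τ n (∏ i ∈ s, c i) (∏ i ∈ s, f i) := by
  classical
  induction s using Finset.induction_on with
  | empty => simpa using of_derivation_eq_zero (map_one ν).le D.map_one_eq_zero
  | insert a s ha ih =>
    rw [Finset.prod_insert ha, Finset.prod_insert ha]
    exact (h a (s.mem_insert_self a)).mul (ih fun i hi ↦ h i (Finset.mem_insert_of_mem hi))

theorem of_mul_left (hgw : DerivBound ν D τ n (c * c') (w * w')) (hg : DerivBound ν D τ n c w)
    (hνw : ν w = c) (hc : c ≠ 0) : DerivBound ν D τ n c' w' := by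
  induction n generalizing c' w' with
  | zero =>
    rw [derivBound_zero_iff, map_mul, hνw] at *
    exact (mul_le_mul_iff_right₀ (zero_lt_iff.2 hc)).1 hgw
  | succ n ih =>
    have hw' := ih (hgw.of_le n.le_succ) (hg.of_le n.le_succ)
    refine derivBound_succ_iff.2 ⟨hw'.le, ih ?_ (hg.of_le n.le_succ)⟩
    have hsub : w * D w' = D (w * w') - w' * D w := by simp [D.leibniz]
    rw [hsub, ← mul_assoc]
    refine (derivBound_succ_iff.1 hgw).2.sub ?_
    rw [mul_comm c, mul_assoc]
    exact hw'.mul (derivBound_succ_iff.1 hg).2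

theorem aeval_of_isHomogeneous {σ : Type*} {w : σ → S} {d : ℕ} {P : MvPolynomial σ ℤ}
    (hP : P.IsHomogeneous d) (h : ∀ i, DerivBound ν D τ n c (w i)) :
    DerivBound ν D τ n (c ^ d) (aeval w P) := by
  rw [aeval_def, eval₂_eq]
  refine sum fun m hm ↦ ?_
  rw [hP.degree_eq_sum_deg_support hm, ← Finset.prod_pow_eq_pow_sum,
    ← one_mul (∏ i ∈ m.support, c ^ m i)]
  exact (of_derivation_eq_zero (valuation_intCast_le_one ν _) (D.map_intCast _)).mul
    (prod fun i _ ↦ (h i).pow _)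

-- Cramer's rule expresses `D (w i)` through the derivatives of `P(w)` and `Q(w)`.
theorem of_jacobian {w : Fin 2 → S} {p q : ℕ} {P Q : MvPolynomial (Fin 2) ℤ}
    (hP : P.IsHomogeneous (p + 1)) (hQ : Q.IsHomogeneous (q + 1)) (hw : ∀ i, ν (w i) ≤ c)
    (hc : c ≠ 0) (hJ : ν (aeval w (jacobian P Q)) = c ^ (p + q))
    (hPw : ∀ n, DerivBound ν D τ n (c ^ (p + 1)) (aeval w P))
    (hQw : ∀ n, DerivBound ν D τ n (c ^ (q + 1)) (aeval w Q)) (n : ℕ) (i : Fin 2) :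
    DerivBound ν D τ n c (w i) := by
  induction n generalizing i with
  | zero => exact derivBound_zero_iff.2 (hw i)
  | succ n ih =>
    have hP_partial (j) : DerivBound ν D τ n (c ^ p) (aeval w (pderiv j P)) :=
      aeval_of_isHomogeneous hP.pderiv ih
    have hQ_partial (j) : DerivBound ν D τ n (c ^ q) (aeval w (pderiv j Q)) :=
      aeval_of_isHomogeneous hQ.pderiv ih
    have hJ_bound : DerivBound ν D τ n (c ^ (p + q)) (aeval w (jacobian P Q)) := by
      rw [jacobian, map_sub, map_mul, map_mul, pow_add]
      exact ((hP_partial 0).mul (hQ_partial 1)).sub ((hP_partial 1).mul (hQ_partial 0))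
    have hDP := (derivBound_succ_iff.1 (hPw (n + 1))).2
    have hDQ := (derivBound_succ_iff.1 (hQw (n + 1))).2
    have cramer (j : Fin 2) : DerivBound ν D τ n (c ^ (p + q) * (c * τ⁻¹))
        (aeval w (pderiv j Q) * D (aeval w P) - aeval w (pderiv j P) * D (aeval w Q)) := by
      have e₁ : c ^ (p + q) * (c * τ⁻¹) = c ^ q * (c ^ (p + 1) * τ⁻¹) := by
        simp only [pow_add, pow_one]
        ac_rfl
      have e₂ : c ^ (p + q) * (c * τ⁻¹) = c ^ p * (c ^ (q + 1) * τ⁻¹) := by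
        simp only [pow_add, pow_one]
        ac_rfl
      exact (e₁ ▸ (hQ_partial j).mul hDP).sub (e₂ ▸ (hP_partial j).mul hDQ)
    refine derivBound_succ_iff.2 ⟨hw i, of_mul_left ?_ hJ_bound hJ (pow_ne_zero _ hc)⟩
    fin_cases i
    · convert cramer 1 using 1
      simp only [Fin.zero_eta, derivation_aeval_eq_sum_pderiv, jacobian, Fin.sum_univ_two,
        map_sub, map_mul]
      ring
    · convert (cramer 0).neg using 1
      simp only [Fin.mk_one, derivation_aeval_eq_sum_pderiv, jacobian, Fin.sum_univ_two,
        map_sub, map_mul]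
      ring

end DerivBound

end DerivBound

/-! ### Lifts along the icosahedral cover -/

section Forms

variable {S Γ₀ : Type*} [CommRing S] [LinearOrderedCommGroupWithZero Γ₀] {ν : Valuation S Γ₀}
  {D : Derivation ℤ S S} {τ c : Γ₀} {w : Fin 2 → S}

theorem valuation_aeval_le_pow_of_isHomogeneous {σ : Type*} {w : σ → S} {d : ℕ}
    {P : MvPolynomial σ ℤ} (hP : P.IsHomogeneous d) (hw : ∀ i, ν (w i) ≤ c) :
    ν (aeval w P) ≤ c ^ d :=
  derivBound_zero_iff.1 (DerivBound.aeval_of_isHomogeneous (D := 0) (τ := 1) hP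
    fun i ↦ derivBound_zero_iff.2 (hw i))

theorem valuation_vertexForm_eq_or_valuation_faceForm_eq (hν : ν 3125 = 1)
    (hw : ∀ i, ν (w i) ≤ c) (hc : ∃ i, ν (w i) = c) :
    ν (aeval w vertexForm) = c ^ 12 ∨ ν (aeval w faceForm) = c ^ 20 := by
  have hvertex := valuation_aeval_le_pow_of_isHomogeneous isHomogeneous_vertexForm hw
  have hface := valuation_aeval_le_pow_of_isHomogeneous isHomogeneous_faceForm hw
  obtain ⟨i, hi⟩ := hc
  obtain ⟨A, B, hA, hB, hAB⟩ := exists_isHomogeneous_combination_eq_X_pow i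
  have hA' := valuation_aeval_le_pow_of_isHomogeneous hA hw
  have hB' := valuation_aeval_le_pow_of_isHomogeneous hB hw
  have hcomb : (3125 : S) * w i ^ 31 =
      aeval w A * aeval w vertexForm + aeval w B * aeval w faceForm := by
    simpa using congrArg (aeval w) hAB
  by_contra! hne
  have hvertex_lt := hvertex.lt_of_ne hne.1
  have hface_lt := hface.lt_of_ne hne.2
  have hc0 : 0 < c := by
    by_contra! hc0
    simp [le_zero_iff.1 hc0] at hvertex_lt
  have hlt : ν (3125 * w i ^ 31) < c ^ 31 := by
    rw [hcomb]
    refine ν.map_add_lt ?_ ?_ <;> rw [map_mul]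
    · exact (mul_le_mul_left hA' _).trans_lt (by
        rw [show 31 = 19 + 12 from rfl, pow_add]
        exact mul_lt_mul_of_pos_left hvertex_lt (pow_pos hc0 _))
    · exact (mul_le_mul_left hB' _).trans_lt (by
        rw [show 31 = 11 + 20 from rfl, pow_add]
        exact mul_lt_mul_of_pos_left hface_lt (pow_pos hc0 _))
  simp [hν, hi] at hlt

theorem derivBound_of_derivBound_kleinForms (hν : ∀ m : ℤ, m ≠ 0 → ν m = 1)
    (hw : ∀ i, ν (w i) ≤ c) (hc : ∃ i, ν (w i) = c) (hc0 : c ≠ 0)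
    (hvertex : ∀ n, DerivBound ν D τ n (c ^ 12) (aeval w vertexForm))
    (hface : ∀ n, DerivBound ν D τ n (c ^ 20) (aeval w faceForm))
    (hedge : ∀ n, DerivBound ν D τ n (c ^ 30) (aeval w edgeForm)) (n : ℕ) (i : Fin 2) :
    DerivBound ν D τ n c (w i) := by
  rcases valuation_vertexForm_eq_or_valuation_faceForm_eq
    (by exact_mod_cast hν 3125 (by norm_num)) hw hc with h | h
  · refine .of_jacobian isHomogeneous_faceForm isHomogeneous_edgeForm hw hc0 ?_ hface hedge n i
    have h86400 : ν 86400 = 1 := by exact_mod_cast hν 86400 (by norm_num)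
    simp [jacobian_faceForm_edgeForm, h, h86400, ← pow_mul]
  · refine .of_jacobian isHomogeneous_vertexForm isHomogeneous_edgeForm hw hc0 ?_ hvertex hedge n i
    have h30 : ν 30 = 1 := by exact_mod_cast hν 30 (by norm_num)
    simp [jacobian_vertexForm_edgeForm, h, h30, ← pow_mul]

end Forms

section PolynomialsInParameter

open Polynomial in
theorem iterate_derivation_aeval {R S : Type*} [CommRing R] [CommRing S] [Algebra R S]
    (D : Derivation R S S) {t : S} (ht : D t = 1) (p : R[X]) (i : ℕ) :
    D^[i] (aeval t p) = aeval t (derivative^[i] p) := by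
  induction i with
  | zero => rfl
  | succ i ih => rw [Function.iterate_succ_apply', ih, D.map_aeval, ht, smul_eq_mul, mul_one,
      Function.iterate_succ_apply']

variable {K S Γ₀ : Type*} [Field K] [CommRing S] [Algebra K S]
  [LinearOrderedCommGroupWithZero Γ₀] {ν : Valuation S Γ₀} [ν.IsTrivialOn K] {t : S}

variable (K) in
theorem valuation_intCast_eq_one_of_isTrivialOn [CharZero K] {m : ℤ} (hm : m ≠ 0) :
    ν m = 1 := by
  simpa using Valuation.IsTrivialOn.eq_one (v := ν) (m : K) (by exact_mod_cast hm)

theorem valuation_aeval_le_one (ht : ν t ≤ 1) (p : Polynomial K) :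
    ν (Polynomial.aeval t p) ≤ 1 := by
  rw [Polynomial.aeval_eq_sum_range]
  refine ν.map_sum_le fun i _ ↦ ?_
  rw [Algebra.smul_def, map_mul, map_pow]
  refine mul_le_one' ?_ (pow_le_one' ht i)
  by_cases h : p.coeff i = 0
  · simp [h]
  · exact (Valuation.IsTrivialOn.eq_one _ h).le

theorem derivBound_aeval_of_le_one (D : Derivation K S S) (hD : D t = 1) (ht : ν t ≤ 1)
    (p : Polynomial K) (n : ℕ) :
    DerivBound ν (D.restrictScalars ℤ) 1 n 1 (Polynomial.aeval t p) := fun i _ ↦ by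
  rw [Derivation.coe_restrictScalars, iterate_derivation_aeval D hD, inv_one, one_pow, mul_one]
  exact valuation_aeval_le_one ht _

theorem derivBound_aeval_of_one_lt (D : Derivation K S S) (hD : D t = 1) (ht : 1 < ν t)
    (p : Polynomial K) (n : ℕ) :
    DerivBound ν (D.restrictScalars ℤ) (ν t) n (ν (Polynomial.aeval t p))
      (Polynomial.aeval t p) := fun i _ ↦ by
  have hiter := iterate_derivation_aeval D hD p i
  rw [Derivation.coe_restrictScalars, hiter]
  by_cases hp : Polynomial.derivative^[i] p = 0
  · simp [hp]
  have hp0 : p ≠ 0 := fun h ↦ hp (by simp [h])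
  rw [inv_pow, ← div_eq_mul_inv, le_div_iff₀ (pow_pos (zero_lt_one.trans ht) i),
    Polynomial.valuation_aeval_eq_valuation_X_pow_natDegree_of_one_lt_valuation_X t ht hp,
    Polynomial.valuation_aeval_eq_valuation_X_pow_natDegree_of_one_lt_valuation_X t ht hp0,
    ← pow_add]
  refine pow_le_pow_right₀ ht.le ?_
  have hi : i ≤ p.natDegree := not_lt.1 fun h ↦ hp (Polynomial.iterate_derivative_eq_zero h)
  have := Polynomial.natDegree_iterate_derivative p i
  omega

theorem valuation_aeval_le_pow_natDegree (ht : 1 < ν t) (p : Polynomial K) :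
    ν (Polynomial.aeval t p) ≤ ν t ^ p.natDegree := by
  by_cases hp : p = 0
  · simp [hp]
  · exact (Polynomial.valuation_aeval_eq_valuation_X_pow_natDegree_of_one_lt_valuation_X t ht hp).le

end PolynomialsInParameter

section KleinLift

/-- `w` is a point over `t` of the Klein cover: the icosahedral forms take polynomial values
`z`, `y`, `x` at `w`, where `t` is the parameter. -/
structure IsKleinLift {K S : Type*} [Field K] [CommRing S] [Algebra K S] (t : S)
    (w : Fin 2 → S) (x y z : Polynomial K) : Prop where
  vertexForm_eq : aeval w vertexForm = Polynomial.aeval t z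
  faceForm_eq : aeval w faceForm = Polynomial.aeval t y
  edgeForm_eq : aeval w edgeForm = Polynomial.aeval t x

namespace IsKleinLift

variable {K S Γ₀ : Type*} [Field K] [CommRing S] [Algebra K S]
  [LinearOrderedCommGroupWithZero Γ₀] {ν : Valuation S Γ₀} {t : S}
  {w : Fin 2 → S} {x y z : Polynomial K} {τ c : Γ₀}

theorem ne_zero (h : IsKleinLift t w x y z) (hzy : IsCoprime z y) (hw : ∀ i, ν (w i) ≤ c) :
    c ≠ 0 := by
  rintro rfl
  obtain ⟨a, b, hab⟩ := hzy
  have hz : ν (Polynomial.aeval t z) ≤ 0 := by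
    simpa [h.vertexForm_eq] using
      valuation_aeval_le_pow_of_isHomogeneous isHomogeneous_vertexForm hw
  have hy : ν (Polynomial.aeval t y) ≤ 0 := by
    simpa [h.faceForm_eq] using
      valuation_aeval_le_pow_of_isHomogeneous isHomogeneous_faceForm hw
  have hone : ν (Polynomial.aeval t (a * z + b * y)) ≤ 0 := by
    rw [map_add, map_mul, map_mul]
    refine ν.map_add_le ?_ ?_ <;> rw [map_mul]
    · simp [le_zero_iff.1 hz]
    · simp [le_zero_iff.1 hy]
  simp [hab] at hone

variable [ν.IsTrivialOn K]

theorem one_le (h : IsKleinLift t w x y z) (hzy : IsCoprime z y) (hw : ∀ i, ν (w i) ≤ c)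
    (ht : ν t ≤ 1) : 1 ≤ c := by
  obtain ⟨a, b, hab⟩ := hzy
  by_contra! hc
  have hz : ν (Polynomial.aeval t z) < 1 := h.vertexForm_eq ▸
    (valuation_aeval_le_pow_of_isHomogeneous isHomogeneous_vertexForm hw).trans_lt
      (pow_lt_one₀ zero_le hc (by norm_num))
  have hy : ν (Polynomial.aeval t y) < 1 := h.faceForm_eq ▸
    (valuation_aeval_le_pow_of_isHomogeneous isHomogeneous_faceForm hw).trans_lt
      (pow_lt_one₀ zero_le hc (by norm_num))
  refine (map_one ν).not_lt ?_
  rw [← map_one (Polynomial.aeval (R := K) t), ← hab, map_add, map_mul, map_mul]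
  refine ν.map_add_lt ?_ ?_ <;> rw [map_mul]
  · exact mul_lt_one_of_nonneg_of_lt_one_right (valuation_aeval_le_one ht a) zero_le hz
  · exact mul_lt_one_of_nonneg_of_lt_one_right (valuation_aeval_le_one ht b) zero_le hy

variable [CharZero K]

theorem derivBound (h : IsKleinLift t w x y z) {D : Derivation ℤ S S} (hw : ∀ i, ν (w i) ≤ c)
    (hc : ∃ i, ν (w i) = c) (hc0 : c ≠ 0)
    (hD : ∀ (p : Polynomial K) (d n : ℕ), ν (Polynomial.aeval t p) ≤ c ^ d →
      DerivBound ν D τ n (c ^ d) (Polynomial.aeval t p)) (n : ℕ) (i : Fin 2) :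
    DerivBound ν D τ n c (w i) := by
  refine derivBound_of_derivBound_kleinForms
    (fun _ ↦ valuation_intCast_eq_one_of_isTrivialOn K) hw hc hc0 ?_ ?_ ?_ n i
  · rw [h.vertexForm_eq]
    exact fun n ↦ hD _ _ n (h.vertexForm_eq ▸
      valuation_aeval_le_pow_of_isHomogeneous isHomogeneous_vertexForm hw)
  · rw [h.faceForm_eq]
    exact fun n ↦ hD _ _ n (h.faceForm_eq ▸
      valuation_aeval_le_pow_of_isHomogeneous isHomogeneous_faceForm hw)
  · rw [h.edgeForm_eq]
    exact fun n ↦ hD _ _ n (h.edgeForm_eq ▸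
      valuation_aeval_le_pow_of_isHomogeneous isHomogeneous_edgeForm hw)

theorem pow_eq_or_pow_eq (h : IsKleinLift t w x y z) (hw : ∀ i, ν (w i) ≤ c)
    (hc : ∃ i, ν (w i) = c) :
    ν (Polynomial.aeval t z) = c ^ 12 ∨ ν (Polynomial.aeval t y) = c ^ 20 := by
  rw [← h.vertexForm_eq, ← h.faceForm_eq]
  exact valuation_vertexForm_eq_or_valuation_faceForm_eq
    (by exact_mod_cast valuation_intCast_eq_one_of_isTrivialOn K (m := 3125) (by norm_num)) hw hc

theorem valuation_iterate_le_one_of_le_one (h : IsKleinLift t w x y z) (hzy : IsCoprime z y)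
    {D : Derivation K S S} (hD : D t = 1) (ht : ν t ≤ 1) (hw : ∀ i, ν (w i) ≤ c)
    (hc : ∃ i, ν (w i) = c) (n : ℕ) (i : Fin 2) : ν (D^[n] (w i)) ≤ 1 := by
  have hc_le : c ≤ 1 := (h.pow_eq_or_pow_eq hw hc).elim
    (fun h ↦ (pow_le_one_iff (n := 12) (by norm_num)).1 (h ▸ valuation_aeval_le_one ht z))
    (fun h ↦ (pow_le_one_iff (n := 20) (by norm_num)).1 (h ▸ valuation_aeval_le_one ht y))
  obtain rfl : c = 1 := hc_le.antisymm (h.one_le hzy hw ht)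
  have hbound := h.derivBound (D := D.restrictScalars ℤ) (τ := 1) hw hc one_ne_zero
    (fun p d n _ ↦ by simpa only [one_pow] using derivBound_aeval_of_le_one D hD ht p n)
    n i n le_rfl
  simpa only [Derivation.coe_restrictScalars, inv_one, one_pow, mul_one] using hbound

theorem valuation_iterate_le_one_of_one_lt (h : IsKleinLift t w x y z) (hzy : IsCoprime z y)
    {D : Derivation K S S} (hD : D t = 1) (ht : 1 < ν t) (hw : ∀ i, ν (w i) ≤ c)
    (hc : ∃ i, ν (w i) = c) (i : Fin 2) : ν (D^[z.natDegree + y.natDegree] (w i)) ≤ 1 := by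
  have hc_le : c ≤ ν t ^ (z.natDegree + y.natDegree) := by
    rcases le_total c 1 with hc1 | hc1
    · exact hc1.trans (one_le_pow_of_one_le' ht.le _)
    rcases h.pow_eq_or_pow_eq hw hc with h | h
    · calc c ≤ c ^ 12 := le_self_pow₀ hc1 (by norm_num)
        _ ≤ ν t ^ z.natDegree := h ▸ valuation_aeval_le_pow_natDegree ht z
        _ ≤ _ := pow_le_pow_right₀ ht.le (by omega)
    · calc c ≤ c ^ 20 := le_self_pow₀ hc1 (by norm_num)
        _ ≤ ν t ^ y.natDegree := h ▸ valuation_aeval_le_pow_natDegree ht y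
        _ ≤ _ := pow_le_pow_right₀ ht.le (by omega)
  have hbound := h.derivBound (D := D.restrictScalars ℤ) (τ := ν t) hw hc (h.ne_zero hzy hw)
    (fun p d n hp ↦ (derivBound_aeval_of_one_lt D hD ht p n).mono hp)
    (z.natDegree + y.natDegree) i _ le_rfl
  refine hbound.trans ?_
  rwa [inv_pow, ← div_eq_mul_inv, div_le_one₀ (pow_pos (zero_lt_one.trans ht) _)]

theorem valuation_iterate_le_one (h : IsKleinLift t w x y z) (hzy : IsCoprime z y)
    {D : Derivation K S S} (hD : D t = 1) (i : Fin 2) :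
    ν (D^[z.natDegree + y.natDegree] (w i)) ≤ 1 := by
  obtain ⟨j, -, hj⟩ := Finset.univ.exists_max_image (fun i ↦ ν (w i)) ⟨0, Finset.mem_univ 0⟩
  have hw (i) : ν (w i) ≤ ν (w j) := hj i (Finset.mem_univ i)
  rcases le_or_gt (ν t) 1 with ht | ht
  · exact h.valuation_iterate_le_one_of_le_one hzy hD ht hw ⟨j, rfl⟩ _ i
  · exact h.valuation_iterate_le_one_of_one_lt hzy hD ht hw ⟨j, rfl⟩ i

end IsKleinLift

end KleinLift

section PowerSeries

theorem isIntegral_of_forall_mem_valuationSubring {R F : Type*} [CommRing R] [Field F] [Algebra R F]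
    {e : F} (h : ∀ V : ValuationSubring F, (∀ a : R, algebraMap R F a ∈ V) → e ∈ V) :
    IsIntegral R e := by
  let R' : Subalgebra R F := ⊥
  have he : e ∈ (⨅ V : {V : ValuationSubring F // (R'.toSubring : Set F) ⊆ V.toSubring},
      V.1.toSubring) :=
    Subring.mem_iInf.2 fun V ↦ h V.1 fun a ↦ V.2 (R'.algebraMap_mem a)
  rw [iInf_valuationSubring_superset, Subring.closure_eq] at he
  have : Algebra.IsIntegral R R' := by
    refine ⟨fun a ↦ ?_⟩
    obtain ⟨b, hb⟩ := Algebra.mem_bot.1 a.2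
    obtain rfl : algebraMap R R' b = a := Subtype.ext hb
    exact isIntegral_algebraMap
  exact isIntegral_trans (A := R') e he

open PowerSeries

variable {K : Type*} [Field K]

theorem exists_C_eq_of_isIntegral {e : K⟦X⟧} (he : IsIntegral K e) :
    ∃ a : K, PowerSeries.C a = e := by
  have hsub : IsIntegral K (e - algebraMap K K⟦X⟧ (constantCoeff e)) := he.sub isIntegral_algebraMap
  refine ⟨constantCoeff e, ?_⟩
  by_contra hne
  have hunit := hsub.isUnit (sub_ne_zero.2 (Ne.symm hne))
  simp [PowerSeries.isUnit_iff_constantCoeff] at hunit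

theorem exists_C_eq_of_forall_valuation_le_one {e : K⟦X⟧}
    (he : ∀ V : ValuationSubring (FractionRing K⟦X⟧),
      (V.valuation.comap (algebraMap K⟦X⟧ (FractionRing K⟦X⟧))).IsTrivialOn K →
      V.valuation (algebraMap K⟦X⟧ (FractionRing K⟦X⟧) e) ≤ 1) : ∃ a : K, PowerSeries.C a = e := by
  refine exists_C_eq_of_isIntegral ?_
  refine (isIntegral_algebraMap_iff (IsFractionRing.injective K⟦X⟧ (FractionRing K⟦X⟧))).1 ?_
  refine isIntegral_of_forall_mem_valuationSubring fun V hV ↦ (V.valuation_le_one_iff _).1 (he V ?_)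
  refine .of_le_one _ fun a ↦ ?_
  rw [Valuation.comap_apply, ← IsScalarTower.algebraMap_apply, V.valuation_le_one_iff]
  exact hV a

theorem exists_polynomial_eq_of_iterate_derivative_eq_zero [CharZero K] {f : K⟦X⟧} {n : ℕ}
    (hf : (PowerSeries.derivative K)^[n] f = 0) : ∃ p : Polynomial K, (p : K⟦X⟧) = f := by
  refine ⟨PowerSeries.trunc n f, PowerSeries.ext fun m ↦ ?_⟩
  rw [Polynomial.coeff_coe, PowerSeries.coeff_trunc]
  split_ifs with hmn
  · rfl
  · have hcoeff := congrArg (PowerSeries.coeff (m - n)) hf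
    rw [PowerSeries.coeff_iterate_derivative, Nat.sub_add_cancel (not_lt.1 hmn), map_zero] at hcoeff
    exact ((mul_eq_zero.1 hcoeff).resolve_left
      (Nat.cast_ne_zero.2 (Nat.ascFactorial_pos _ _).ne')).symm

theorem polynomial_aeval_powerSeries_X (p : Polynomial K) :
    Polynomial.aeval (PowerSeries.X : K⟦X⟧) p = p := by
  have h : Polynomial.aeval PowerSeries.X = Polynomial.coeToPowerSeries.algHom (R := K) K := by
    ext
    simp
  simp [h]

theorem IsKleinLift.exists_polynomial_eq [CharZero K] {w : Fin 2 → K⟦X⟧} {x y z : Polynomial K}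
    (h : IsKleinLift PowerSeries.X w x y z) (hzy : IsCoprime z y) (i : Fin 2) :
    ∃ p : Polynomial K, (p : K⟦X⟧) = w i := by
  let n := z.natDegree + y.natDegree
  obtain ⟨a, ha⟩ : ∃ a : K, PowerSeries.C a = (PowerSeries.derivative K)^[n] (w i) := by
    refine exists_C_eq_of_forall_valuation_le_one fun V hV ↦ ?_
    exact h.valuation_iterate_le_one
      (ν := V.valuation.comap (algebraMap K⟦X⟧ (FractionRing K⟦X⟧))) hzy PowerSeries.derivative_X i
  refine exists_polynomial_eq_of_iterate_derivative_eq_zero (n := n + 1) ?_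
  rw [Function.iterate_succ_apply', ← ha, PowerSeries.derivative_C]

end PowerSeries

/-! ### Points of the icosahedral cover over power series -/

theorem aeval_smul_of_isHomogeneous {R S σ : Type*} [CommRing R] [CommRing S] [Algebra R S]
    {P : MvPolynomial σ R} {d : ℕ} (hP : P.IsHomogeneous d) (c : S) (w : σ → S) :
    aeval (c • w) P = c ^ d * aeval w P := by
  rw [aeval_def, aeval_def, eval₂_eq, eval₂_eq, Finset.mul_sum]
  refine Finset.sum_congr rfl fun m hm ↦ ?_
  simp only [Pi.smul_apply, smul_eq_mul, mul_pow, Finset.prod_mul_distrib]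
  rw [hP.degree_eq_sum_deg_support hm, Finset.prod_pow_eq_pow_sum]
  ring

section Fibre

variable {R : Type*} [CommRing R]

/-- The polynomial whose roots `s` are the points `(1 : s)` of the projective line at which the
rational function `faceForm³ / vertexForm⁵` takes the value `κ`. -/
noncomputable def fibrePolynomial (κ : R) : Polynomial R :=
  Polynomial.C κ * aeval ![1, Polynomial.X] vertexForm ^ 5 - aeval ![1, Polynomial.X] faceForm ^ 3

theorem map_aeval_int {S σ : Type*} [CommRing S] [Algebra ℤ R] [Algebra ℤ S] (f : R →+* S)
    (w : σ → R) (P : MvPolynomial σ ℤ) : f (aeval w P) = aeval (fun i ↦ f (w i)) P := by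
  rw [map_aeval, aeval_def, RingHom.ext_int (f.comp (algebraMap ℤ R)) (algebraMap ℤ S)]
  rfl

theorem aeval_eq_of_aeval_map_eq {S σ : Type*} [CommRing S] [Algebra ℤ R] {f : R →+* S}
    (hf : Function.Injective f) {w : σ → R} {P : MvPolynomial σ ℤ} {a : R}
    (h : aeval (fun i ↦ f (w i)) P = f a) : aeval w P = a :=
  hf ((map_aeval_int f w P).trans h)

theorem map_aeval_one_cons {S : Type*} [CommRing S] [Algebra ℤ R] [Algebra ℤ S] (f : R →+* S)
    (s : R) (P : MvPolynomial (Fin 2) ℤ) : f (aeval ![1, s] P) = aeval ![1, f s] P := by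
  have hw : (fun i ↦ f (![1, s] i)) = ![1, f s] := by
    ext i
    fin_cases i <;> simp
  rw [map_aeval_int, hw]

theorem eval_fibrePolynomial (κ s : R) : (fibrePolynomial κ).eval s =
    κ * aeval ![1, s] vertexForm ^ 5 - aeval ![1, s] faceForm ^ 3 := by
  have h := map_aeval_one_cons (Polynomial.evalRingHom s) Polynomial.X
  simp only [Polynomial.coe_evalRingHom, Polynomial.eval_X] at h
  simp [fibrePolynomial, h]

theorem map_fibrePolynomial {S : Type*} [CommRing S] (f : R →+* S) (κ : R) :
    (fibrePolynomial κ).map f = fibrePolynomial (f κ) := by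
  have h := map_aeval_one_cons (Polynomial.mapRingHom f) Polynomial.X
  simp only [Polynomial.coe_mapRingHom, Polynomial.map_X] at h
  simp [fibrePolynomial, h]

theorem derivative_aeval_one_X (P : MvPolynomial (Fin 2) ℤ) :
    Polynomial.derivative (aeval ![1, (Polynomial.X : Polynomial R)] P) =
      aeval ![1, Polynomial.X] (pderiv 1 P) := by
  have h := derivation_aeval_eq_sum_pderiv
    ((Polynomial.derivative' (R := R)).restrictScalars ℤ) ![1, Polynomial.X] P
  simpa using h

theorem eval_derivative_fibrePolynomial (κ s : R) : (fibrePolynomial κ).derivative.eval s =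
    5 * κ * aeval ![1, s] vertexForm ^ 4 * aeval ![1, s] (pderiv 1 vertexForm) -
      3 * aeval ![1, s] faceForm ^ 2 * aeval ![1, s] (pderiv 1 faceForm) := by
  have h := map_aeval_one_cons (Polynomial.evalRingHom s) Polynomial.X
  simp only [Polynomial.coe_evalRingHom, Polynomial.eval_X] at h
  simp only [fibrePolynomial, Polynomial.derivative_sub, Polynomial.derivative_mul,
    Polynomial.derivative_C, Polynomial.derivative_pow, derivative_aeval_one_X, Polynomial.eval_sub,
    Polynomial.eval_add, Polynomial.eval_mul, Polynomial.eval_zero, Polynomial.eval_C,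
    Polynomial.eval_pow, h, Nat.cast_ofNat]
  ring

theorem exists_fibrePolynomial_eq_X_pow_add (κ : R) :
    ∃ q : Polynomial R, q.degree < 60 ∧ fibrePolynomial κ = Polynomial.X ^ 60 + q := by
  let X : Polynomial R := Polynomial.X
  let q : Polynomial R := 228 * X ^ 15 + 494 * X ^ 10 - 228 * X ^ 5 + 1
  refine ⟨Polynomial.C κ * (X + 11 * X ^ 6 - X ^ 11) ^ 5 +
    (3 * X ^ 40 * q + 3 * X ^ 20 * q ^ 2 + q ^ 3), ?_, ?_⟩
  · simp only [q, X]
    compute_degree!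
  · simp only [fibrePolynomial, vertexForm, faceForm, map_ofNat, map_sub, map_add, map_neg, map_mul,
      map_pow, aeval_X, Matrix.cons_val_zero, Matrix.cons_val_one, Matrix.cons_val_fin_one, q, X]
    ring

theorem fibrePolynomial_monic [Nontrivial R] (κ : R) : (fibrePolynomial κ).Monic := by
  obtain ⟨q, hq, h⟩ := exists_fibrePolynomial_eq_X_pow_add κ
  exact h ▸ Polynomial.monic_X_pow_add hq

theorem degree_fibrePolynomial [Nontrivial R] (κ : R) : (fibrePolynomial κ).degree = 60 := by
  obtain ⟨q, hq, h⟩ := exists_fibrePolynomial_eq_X_pow_add κ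
  rw [h, Polynomial.degree_add_eq_left_of_degree_lt (by simpa using hq), Polynomial.degree_X_pow]
  rfl

end Fibre

section KleinPair

/-- The pair `(s, w)` satisfies the equations saying that the point `(w, w s)` of the plane has
icosahedral invariants proportional to `(z, y, x)`, with the scaling fixed up to sign by `w`. -/
structure IsKleinPair {S : Type*} [CommRing S] (x y z s w : S) : Prop where
  faceForm_cube_mul :
    aeval ![1, s] faceForm ^ 3 * z ^ 5 = y ^ 3 * aeval ![1, s] vertexForm ^ 5
  sq_mul : w ^ 2 * (aeval ![1, s] vertexForm * aeval ![1, s] faceForm * x) =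
    z * y * aeval ![1, s] edgeForm

namespace IsKleinPair

variable {S : Type*} [CommRing S] {x y z s w : S}

theorem map {S' : Type*} [CommRing S'] (h : IsKleinPair x y z s w) (f : S →+* S') :
    IsKleinPair (f x) (f y) (f z) (f s) (f w) where
  faceForm_cube_mul := by
    simpa only [map_mul, map_pow, map_aeval_one_cons] using congrArg f h.faceForm_cube_mul
  sq_mul := by
    simpa only [map_mul, map_pow, map_aeval_one_cons] using congrArg f h.sq_mul

end IsKleinPair

theorem aeval_edgeForm_sq_add_faceForm_cube {S : Type*} [CommRing S] (v : Fin 2 → S) :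
    aeval v edgeForm ^ 2 + aeval v faceForm ^ 3 = 1728 * aeval v vertexForm ^ 5 := by
  simpa using congrArg (aeval v) edgeForm_sq_add_faceForm_cube

section Domain

variable {S : Type*} [CommRing S] {x y z s w : S}

theorem edgeForm_sq_mul_of_faceForm_cube_mul (hrel : x ^ 2 + y ^ 3 = 1728 * z ^ 5)
    (hs : aeval ![1, s] faceForm ^ 3 * z ^ 5 = y ^ 3 * aeval ![1, s] vertexForm ^ 5) :
    aeval ![1, s] edgeForm ^ 2 * z ^ 5 = x ^ 2 * aeval ![1, s] vertexForm ^ 5 := by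
  linear_combination z ^ 5 * aeval_edgeForm_sq_add_faceForm_cube ![1, s] -
    aeval ![1, s] vertexForm ^ 5 * hrel - hs

variable [IsDomain S]

theorem vertexForm_ne_zero_of_faceForm_cube_mul [CharZero S] (hz : z ≠ 0)
    (hs : aeval ![1, s] faceForm ^ 3 * z ^ 5 = y ^ 3 * aeval ![1, s] vertexForm ^ 5) :
    aeval ![1, s] vertexForm ≠ 0 := by
  intro hvertex
  have hface : aeval ![1, s] faceForm = 0 := by simpa [hvertex, hz] using hs
  obtain ⟨A, B, -, -, hAB⟩ := exists_isHomogeneous_combination_eq_X_pow 0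
  have := congrArg (aeval ![1, s]) hAB
  simp [hvertex, hface] at this

theorem forms_ne_zero_of_faceForm_cube_mul [CharZero S] (hrel : x ^ 2 + y ^ 3 = 1728 * z ^ 5)
    (hx : x ≠ 0) (hy : y ≠ 0) (hz : z ≠ 0)
    (hs : aeval ![1, s] faceForm ^ 3 * z ^ 5 = y ^ 3 * aeval ![1, s] vertexForm ^ 5) :
    aeval ![1, s] vertexForm ≠ 0 ∧ aeval ![1, s] faceForm ≠ 0 ∧ aeval ![1, s] edgeForm ≠ 0 := by
  have hvertex := vertexForm_ne_zero_of_faceForm_cube_mul hz hs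
  have hedge := edgeForm_sq_mul_of_faceForm_cube_mul hrel hs
  refine ⟨hvertex, fun h ↦ ?_, fun h ↦ ?_⟩
  · have hs' := hs.symm
    simp [h, hy, hvertex] at hs'
  · have hedge' := hedge.symm
    simp [h, hx, hvertex] at hedge'

theorem eval_derivative_fibrePolynomial_ne_zero [CharZero S] {κ : S}
    (hroot : (fibrePolynomial κ).IsRoot s) (hface : aeval ![1, s] faceForm ≠ 0)
    (hedge : aeval ![1, s] edgeForm ≠ 0) : (fibrePolynomial κ).derivative.eval s ≠ 0 := by
  intro h
  rw [Polynomial.IsRoot, eval_fibrePolynomial] at hroot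
  rw [eval_derivative_fibrePolynomial] at h
  have hpartial : 3 * aeval ![1, s] vertexForm * aeval ![1, s] (pderiv 1 faceForm) =
      5 * aeval ![1, s] edgeForm +
        5 * aeval ![1, s] (pderiv 1 vertexForm) * aeval ![1, s] faceForm := by
    simpa using congrArg (aeval ![1, s]) three_mul_vertexForm_mul_pderiv_faceForm
  have hzero : 5 * (aeval ![1, s] faceForm ^ 2 * aeval ![1, s] edgeForm) = 0 := by
    linear_combination -aeval ![1, s] vertexForm * h +
      5 * aeval ![1, s] (pderiv 1 vertexForm) * hroot - aeval ![1, s] faceForm ^ 2 * hpartial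
  simp [hface, hedge] at hzero

theorem isRoot_fibrePolynomial_iff {κ : S} (hκ : κ * z ^ 5 = y ^ 3) (hz : z ≠ 0) :
    (fibrePolynomial κ).IsRoot s ↔
      aeval ![1, s] faceForm ^ 3 * z ^ 5 = y ^ 3 * aeval ![1, s] vertexForm ^ 5 := by
  rw [Polynomial.IsRoot, eval_fibrePolynomial, sub_eq_zero, ← hκ, mul_right_comm,
    mul_left_inj' (pow_ne_zero 5 hz), eq_comm]

variable {φ η θ : S}

theorem pow_mul_eq_of_klein_relations (hφ : φ ≠ 0) (hη : η ≠ 0) (hx : x ≠ 0) (hz : z ≠ 0)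
    (hface : η ^ 3 * z ^ 5 = y ^ 3 * φ ^ 5) (hedge : θ ^ 2 * z ^ 5 = x ^ 2 * φ ^ 5)
    (hw : w ^ 2 * (φ * η * x) = z * y * θ) :
    w ^ 12 * φ = z ∧ w ^ 20 * η = y ∧ w ^ 30 * θ = x := by
  have hne : φ * η * x ≠ 0 := mul_ne_zero (mul_ne_zero hφ hη) hx
  have hcross : η ^ 3 * x ^ 2 = y ^ 3 * θ ^ 2 := by
    refine mul_left_cancel₀ (pow_ne_zero 5 hz) ?_
    linear_combination x ^ 2 * hface - y ^ 3 * hedge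
  have hpow (n : ℕ) : (φ * η * x) ^ n * w ^ (2 * n) = (z * y * θ) ^ n := by
    rw [← hw, pow_mul]; ring
  refine ⟨mul_left_cancel₀ (pow_ne_zero 6 hne) ?_, mul_left_cancel₀ (pow_ne_zero 10 hne) ?_,
    mul_left_cancel₀ (pow_ne_zero 15 hne) ?_⟩
  · calc (φ * η * x) ^ 6 * (w ^ 12 * φ) = (z * y * θ) ^ 6 * φ := by rw [← hpow]; ring
      _ = z * φ * (θ ^ 2 * z ^ 5) * (y ^ 3 * θ ^ 2) ^ 2 := by ring
      _ = (φ * η * x) ^ 6 * z := by rw [← hcross, hedge]; ring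
  · calc (φ * η * x) ^ 10 * (w ^ 20 * η) = (z * y * θ) ^ 10 * η := by rw [← hpow]; ring
      _ = η * y * (θ ^ 2 * z ^ 5) ^ 2 * (y ^ 3 * θ ^ 2) ^ 3 := by ring
      _ = (φ * η * x) ^ 10 * y := by rw [← hcross, hedge]; ring
  · calc (φ * η * x) ^ 15 * (w ^ 30 * θ) = (z * y * θ) ^ 15 * θ := by rw [← hpow]; ring
      _ = (θ ^ 2 * z ^ 5) ^ 3 * (y ^ 3 * θ ^ 2) ^ 5 := by ring
      _ = (φ * η * x) ^ 15 * x := by rw [← hcross, hedge]; ring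

theorem IsKleinPair.aeval_smul_eq [CharZero S] (h : IsKleinPair x y z s w)
    (hrel : x ^ 2 + y ^ 3 = 1728 * z ^ 5) (hx : x ≠ 0) (hy : y ≠ 0) (hz : z ≠ 0) :
    aeval (w • ![1, s]) vertexForm = z ∧ aeval (w • ![1, s]) faceForm = y ∧
      aeval (w • ![1, s]) edgeForm = x := by
  obtain ⟨hvertex, hface, -⟩ := forms_ne_zero_of_faceForm_cube_mul hrel hx hy hz h.faceForm_cube_mul
  rw [aeval_smul_of_isHomogeneous isHomogeneous_vertexForm,
    aeval_smul_of_isHomogeneous isHomogeneous_faceForm,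
    aeval_smul_of_isHomogeneous isHomogeneous_edgeForm]
  exact pow_mul_eq_of_klein_relations hvertex hface hx hz h.faceForm_cube_mul
    (edgeForm_sq_mul_of_faceForm_cube_mul hrel h.faceForm_cube_mul) h.sq_mul

end Domain

theorem exists_isKleinPair [IsAlgClosed k] [CharZero k] {x y z : k}
    (hrel : x ^ 2 + y ^ 3 = 1728 * z ^ 5) (hx : x ≠ 0) (hy : y ≠ 0) (hz : z ≠ 0) :
    ∃ s w, IsKleinPair x y z s w := by
  obtain ⟨s, hs⟩ := IsAlgClosed.exists_root (fibrePolynomial (y ^ 3 / z ^ 5))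
    (by rw [degree_fibrePolynomial]; norm_num)
  rw [isRoot_fibrePolynomial_iff (div_mul_cancel₀ _ (pow_ne_zero 5 hz)) hz] at hs
  obtain ⟨hvertex, hface, -⟩ := forms_ne_zero_of_faceForm_cube_mul hrel hx hy hz hs
  obtain ⟨w, hw⟩ := IsAlgClosed.exists_pow_nat_eq
    (z * y * aeval ![1, s] edgeForm / (aeval ![1, s] vertexForm * aeval ![1, s] faceForm * x))
    zero_lt_two
  exact ⟨s, w, hs, (eq_div_iff (mul_ne_zero (mul_ne_zero hvertex hface) hx)).1 hw⟩

section Lifting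

variable {S K : Type*} [CommRing S] [Field K] {f : S →+* K} [IsLocalHom f]

theorem exists_mul_eq_of_map_ne_zero {b : S} (hb : f b ≠ 0) (c : S) : ∃ q, q * b = c :=
  (exists_eq_mul_left_of_dvd (IsUnit.of_map f b hb.isUnit).dvd).imp fun _ ↦ Eq.symm

variable [HenselianRing S (RingHom.ker f)]

theorem exists_isRoot_of_isRoot_map (hf : Function.Surjective f) {P : Polynomial S}
    (hP : P.Monic) {a : K} (h : (P.map f).IsRoot a) (h' : (P.map f).derivative.eval a ≠ 0) :
    ∃ s, P.IsRoot s ∧ f s = a := by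
  obtain ⟨s₀, rfl⟩ := hf a
  rw [Polynomial.derivative_map, Polynomial.eval_map_apply] at h'
  obtain ⟨s, hs, hs₀⟩ := HenselianRing.is_henselian (I := RingHom.ker f) P hP s₀
    (by rwa [Polynomial.IsRoot, Polynomial.eval_map_apply] at h)
    ((IsUnit.of_map f _ h'.isUnit).map _)
  exact ⟨s, hs, by rwa [RingHom.mem_ker, map_sub, sub_eq_zero] at hs₀⟩

theorem exists_sq_mul_eq_of_map [CharZero K] (hf : Function.Surjective f) {b c : S} {w₀ : K}
    (hb : f b ≠ 0) (hc : f c ≠ 0) (hw₀ : w₀ ^ 2 * f b = f c) : ∃ w, w ^ 2 * b = c := by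
  obtain ⟨q, rfl⟩ := exists_mul_eq_of_map_ne_zero hb c
  have hq : w₀ ^ 2 = f q := mul_right_cancel₀ hb (by rw [hw₀, map_mul])
  have hw₀_ne : w₀ ≠ 0 := by
    rintro rfl
    simp [← hq] at hc
  obtain ⟨w, hw, -⟩ := exists_isRoot_of_isRoot_map hf
    (Polynomial.monic_X_pow_sub_C q two_ne_zero) (a := w₀) (by simp [hq]) (by simpa using hw₀_ne)
  have hwq : w ^ 2 = q := by simpa [sub_eq_zero] using hw
  exact ⟨w, by rw [hwq]⟩

theorem IsKleinPair.exists_isKleinPair_of_map [IsDomain S] [CharZero K]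
    (hf : Function.Surjective f) {x y z : S} {s₀ w₀ : K}
    (h : IsKleinPair (f x) (f y) (f z) s₀ w₀) (hrel : x ^ 2 + y ^ 3 = 1728 * z ^ 5)
    (hx : f x ≠ 0) (hy : f y ≠ 0) (hz : f z ≠ 0) : ∃ s w, IsKleinPair x y z s w := by
  have hrel₀ : f x ^ 2 + f y ^ 3 = 1728 * f z ^ 5 := by
    simpa only [map_add, map_mul, map_pow, map_ofNat] using congrArg f hrel
  obtain ⟨hvertex, hface, hedge⟩ :=
    forms_ne_zero_of_faceForm_cube_mul hrel₀ hx hy hz h.faceForm_cube_mul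
  obtain ⟨κ, hκ⟩ := exists_mul_eq_of_map_ne_zero (f := f) (b := z ^ 5) (by simpa using hz) (y ^ 3)
  have hκ₀ : f κ * f z ^ 5 = f y ^ 3 := by simpa only [map_mul, map_pow] using congrArg f hκ
  have hroot := (isRoot_fibrePolynomial_iff hκ₀ hz).2 h.faceForm_cube_mul
  obtain ⟨s, hs, rfl⟩ := exists_isRoot_of_isRoot_map hf (fibrePolynomial_monic κ)
    (map_fibrePolynomial f κ ▸ hroot)
    (map_fibrePolynomial f κ ▸ eval_derivative_fibrePolynomial_ne_zero hroot hface hedge)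
  rw [isRoot_fibrePolynomial_iff hκ (by rintro rfl; simp at hz)] at hs
  simp only [← map_aeval_one_cons] at hvertex hface hedge
  obtain ⟨w, hw⟩ := exists_sq_mul_eq_of_map hf (w₀ := w₀)
    (b := aeval ![1, s] vertexForm * aeval ![1, s] faceForm * x)
    (c := z * y * aeval ![1, s] edgeForm)
    (by simp only [map_mul]; exact mul_ne_zero (mul_ne_zero hvertex hface) hx)
    (by simp only [map_mul]; exact mul_ne_zero (mul_ne_zero hz hy) hedge)
    (by simpa only [map_mul, map_aeval_one_cons] using h.sq_mul)
  exact ⟨s, w, hs, hw⟩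

end Lifting

section Polynomial

open scoped PowerSeries

variable {K : Type*} [Field K]

instance henselianRing_ker_constantCoeff :
    HenselianRing K⟦X⟧ (RingHom.ker (PowerSeries.constantCoeff (R := K))) := by
  rw [PowerSeries.ker_coeff_eq_max_ideal, PowerSeries.maximalIdeal_eq_span_X]
  infer_instance

instance isLocalHom_constantCoeff : IsLocalHom (PowerSeries.constantCoeff (R := K)) :=
  ⟨fun _ ↦ PowerSeries.isUnit_iff_constantCoeff.2⟩

variable [IsAlgClosed k] [CharZero K] [Algebra k K] {x y z : Polynomial K} {x₀ y₀ z₀ : k}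

theorem exists_isKleinLift_powerSeries_X (hrel : x ^ 2 + y ^ 3 = 1728 * z ^ 5) (hx₀ : x₀ ≠ 0)
    (hy₀ : y₀ ≠ 0) (hz₀ : z₀ ≠ 0) (hx : x.coeff 0 = algebraMap k K x₀)
    (hy : y.coeff 0 = algebraMap k K y₀) (hz : z.coeff 0 = algebraMap k K z₀) :
    ∃ w : Fin 2 → K⟦X⟧, IsKleinLift PowerSeries.X w x y z := by
  have : CharZero k := (algebraMap k K).charZero_iff (algebraMap k K).injective |>.2 inferInstance
  have : CharZero K⟦X⟧ := charZero_of_injective_algebraMap (algebraMap K K⟦X⟧).injective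
  have hrel₀ : x₀ ^ 2 + y₀ ^ 3 = 1728 * z₀ ^ 5 := by
    refine (algebraMap k K).injective ?_
    rw [map_add, map_mul, map_ofNat, map_pow, map_pow, map_pow, ← hx, ← hy, ← hz]
    simpa [Polynomial.coeff_zero_eq_eval_zero] using congrArg (Polynomial.eval 0) hrel
  have hrel' : (x : K⟦X⟧) ^ 2 + (y : K⟦X⟧) ^ 3 = 1728 * (z : K⟦X⟧) ^ 5 := by
    simpa only [map_add, map_mul, map_ofNat, map_pow,
      Polynomial.coeToPowerSeries.ringHom_apply] using
      congrArg (Polynomial.coeToPowerSeries.ringHom (R := K)) hrel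
  have hconst_ne {p : Polynomial K} {a : k} (ha : a ≠ 0) (h : p.coeff 0 = algebraMap k K a) :
      PowerSeries.constantCoeff (p : K⟦X⟧) ≠ 0 := by simpa [h] using ha
  have hne {p : Polynomial K} {a : k} (ha : a ≠ 0) (h : p.coeff 0 = algebraMap k K a) :
      (p : K⟦X⟧) ≠ 0 := fun hp ↦ hconst_ne ha h (by rw [hp, map_zero])
  obtain ⟨s₀, w₀, h₀⟩ := exists_isKleinPair hrel₀ hx₀ hy₀ hz₀
  obtain ⟨s, w, hsw⟩ := IsKleinPair.exists_isKleinPair_of_map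
    PowerSeries.constantCoeff_surj
    (by simpa only [Polynomial.constantCoeff_coe, hx, hy, hz] using h₀.map (algebraMap k K))
    hrel' (hconst_ne hx₀ hx) (hconst_ne hy₀ hy) (hconst_ne hz₀ hz)
  obtain ⟨hvertex, hface, hedge⟩ := hsw.aeval_smul_eq hrel' (hne hx₀ hx) (hne hy₀ hy) (hne hz₀ hz)
  refine ⟨w • ![1, s], ?_⟩
  constructor <;> rw [polynomial_aeval_powerSeries_X]
  exacts [hvertex, hface, hedge]

theorem exists_polynomial_aeval_vertexForm_eq
    (hrel : x ^ 2 + y ^ 3 = 1728 * z ^ 5) (hzy : IsCoprime z y) (hx₀ : x₀ ≠ 0) (hy₀ : y₀ ≠ 0)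
    (hz₀ : z₀ ≠ 0) (hx : x.coeff 0 = algebraMap k K x₀) (hy : y.coeff 0 = algebraMap k K y₀)
    (hz : z.coeff 0 = algebraMap k K z₀) :
    ∃ u : Fin 2 → Polynomial K, aeval u vertexForm = z := by
  obtain ⟨w, hw⟩ := exists_isKleinLift_powerSeries_X hrel hx₀ hy₀ hz₀ hx hy hz
  choose u hu using hw.exists_polynomial_eq hzy
  obtain rfl : (fun i ↦ Polynomial.coeToPowerSeries.ringHom (u i)) = w := funext hu
  have hinj : Function.Injective (Polynomial.coeToPowerSeries.ringHom (R := K)) :=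
    Polynomial.coe_injective K
  exact ⟨u, aeval_eq_of_aeval_map_eq hinj
    (hw.vertexForm_eq.trans (polynomial_aeval_powerSeries_X z))⟩

end Polynomial

end KleinPair

/-! ### Restriction to the generic line through the origin -/

section RadialSubstitution

variable {σ : Type*}

/-- The substitution `p(X) ↦ p(t X)`, which restricts `p` to the generic line through the
origin. -/
noncomputable def radialSubst : MvPolynomial σ k →ₐ[k] Polynomial (MvPolynomial σ k) :=
  aeval fun i ↦ Polynomial.C (X i) * Polynomial.X

/-- The automorphism `X ↦ c X` of the polynomial ring. -/
noncomputable def dilation (c : kˣ) : MvPolynomial σ k ≃ₐ[k] MvPolynomial σ k :=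
  AlgEquiv.ofAlgHom (aeval fun i ↦ C (c : k) * X i) (aeval fun i ↦ C (c⁻¹ : kˣ).1 * X i)
    (by ext i; simp [algebraMap_eq, ← mul_assoc, ← C_mul])
    (by ext i; simp [algebraMap_eq, ← mul_assoc, ← C_mul])

theorem radialSubst_C (a : k) : radialSubst (σ := σ) (C a) = Polynomial.C (C a) := by
  simp [radialSubst, algebraMap_eq]

theorem eval_C_radialSubst (c : k) (p : MvPolynomial σ k) :
    (radialSubst p).eval (C c) = aeval (fun i ↦ C c * X i) p := by
  induction p using MvPolynomial.induction_on with
  | C a => simp [algebraMap_eq]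
  | add p q hp hq => simp only [map_add, Polynomial.eval_add, hp, hq]
  | mul_X p i hp =>
    have hX : (radialSubst (X i : MvPolynomial σ k)).eval (C c) = C c * X i := by
      simp only [radialSubst, aeval_X, Polynomial.eval_mul, Polynomial.eval_C, Polynomial.eval_X,
        mul_comm]
    simp only [map_mul, Polynomial.eval_mul, hp, hX, aeval_X]

theorem eval_one_radialSubst (p : MvPolynomial σ k) : (radialSubst p).eval 1 = p := by
  simpa using eval_C_radialSubst 1 p

theorem eval_C_unit_radialSubst (c : kˣ) (p : MvPolynomial σ k) :
    (radialSubst p).eval (C (c : k)) = dilation c p :=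
  eval_C_radialSubst _ p

theorem coeff_zero_radialSubst (p : MvPolynomial σ k) :
    (radialSubst p).coeff 0 = C (constantCoeff p) := by
  have h := eval_C_radialSubst 0 p
  simp only [C_0, zero_mul] at h
  rw [Polynomial.coeff_zero_eq_eval_zero, h, aeval_zero', algebraMap_eq]

theorem radialSubst_injective : Function.Injective (radialSubst (k := k) (σ := σ)) :=
  Function.LeftInverse.injective eval_one_radialSubst

theorem natDegree_radialSubst_ne_zero {p : MvPolynomial σ k} (hp : Irreducible p) :
    (radialSubst p).natDegree ≠ 0 := by
  intro h
  have hpC : p = C (constantCoeff p) := by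
    rw [← coeff_zero_radialSubst, ← Polynomial.eval_C (a := (radialSubst p).coeff 0) (x := 1),
      ← Polynomial.eq_C_of_natDegree_eq_zero h, eval_one_radialSubst]
  have hne : constantCoeff p ≠ 0 := fun h0 ↦ hp.ne_zero (by rw [hpC, h0, C_0])
  exact hp.not_isUnit (hpC ▸ hne.isUnit.map C)

theorem map_C_map_constantCoeff_eq_of_infinite {R : Type*} [CommRing R] [IsDomain R]
    {g : Polynomial (MvPolynomial σ R)}
    (hg : {c : R | g.eval (C c) ∈ Set.range C}.Infinite) :
    (g.map constantCoeff).map C = g := by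
  refine (sub_eq_zero.1 (Polynomial.eq_zero_of_infinite_isRoot _ ?_)).symm
  refine (hg.image (C_injective σ R).injOn).mono ?_
  rintro _ ⟨c, ⟨d, hd⟩, rfl⟩
  have hconst : (g.map constantCoeff).eval c = d := by
    rw [← constantCoeff_C σ c, Polynomial.eval_map_apply, ← hd, constantCoeff_C]
  simp [Polynomial.eval_map_apply, hconst, hd]

theorem isUnit_of_dvd_radialSubst_of_infinite [IsAlgClosed k] {p : MvPolynomial σ k} (hp : p ≠ 0)
    (hp₀ : constantCoeff p ≠ 0) {g : Polynomial (MvPolynomial σ k)} (hgp : g ∣ radialSubst p)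
    (hg : {c : k | g.eval (C c) ∈ Set.range C}.Infinite) : IsUnit g := by
  rw [← map_C_map_constantCoeff_eq_of_infinite hg] at hgp ⊢
  set q := g.map constantCoeff
  refine IsUnit.map (Polynomial.mapRingHom C) (Polynomial.isUnit_iff_degree_eq_zero.2 ?_)
  by_contra hdeg
  obtain ⟨c, hc⟩ := IsAlgClosed.exists_root q hdeg
  have hzero : (radialSubst p).eval (C c) = 0 := by
    refine zero_dvd_iff.1 ?_
    simpa [Polynomial.eval_map_apply, hc.eq_zero] using Polynomial.eval_dvd (x := C c) hgp
  rcases eq_or_ne c 0 with rfl | hc0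
  · rw [C_0, ← Polynomial.coeff_zero_eq_eval_zero, coeff_zero_radialSubst] at hzero
    simp [hp₀] at hzero
  · lift c to kˣ using hc0.isUnit
    rw [eval_C_unit_radialSubst] at hzero
    simp [hp] at hzero

theorem irreducible_radialSubst [IsAlgClosed k] {p : MvPolynomial σ k} (hp : Irreducible p)
    (hp₀ : constantCoeff p ≠ 0) : Irreducible (radialSubst p) := by
  refine irreducible_iff.2 ⟨fun h ↦ natDegree_radialSubst_ne_zero hp
    (Polynomial.natDegree_eq_zero_of_isUnit h), fun g h hgh ↦ ?_⟩
  have hcover (c : kˣ) : g.eval (C c.1) ∈ Set.range C ∨ h.eval (C c.1) ∈ Set.range C := by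
    have hc : Irreducible (g.eval (C c.1) * h.eval (C c.1)) := by
      rw [← Polynomial.eval_mul, ← hgh, eval_C_unit_radialSubst]
      exact (MulEquiv.irreducible_iff (dilation c)).2 hp
    have hrange {q : MvPolynomial σ k} (hq : IsUnit q) : q ∈ Set.range C :=
      (isUnit_iff_eq_C_of_isReduced.1 hq).imp fun _ hr ↦ hr.2.symm
    exact (hc.isUnit_or_isUnit rfl).imp hrange hrange
  have hinf : ({c : k | g.eval (C c) ∈ Set.range C} ∪
      {c : k | h.eval (C c) ∈ Set.range C}).Infinite := by
    refine (Set.finite_singleton (0 : k)).infinite_compl.mono fun c hc ↦ ?_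
    lift c to kˣ using isUnit_iff_ne_zero.2 hc
    exact hcover c
  exact (Set.infinite_union.1 hinf).imp
    (isUnit_of_dvd_radialSubst_of_infinite hp.ne_zero hp₀ (Dvd.intro _ hgh.symm))
    (isUnit_of_dvd_radialSubst_of_infinite hp.ne_zero hp₀ (Dvd.intro_left _ hgh.symm))

/-- The restriction of a polynomial to the generic line through the origin, with coefficients in
the function field. -/
noncomputable def genericRadial : MvPolynomial σ k →+*
    Polynomial (FractionRing (MvPolynomial σ k)) :=
  (Polynomial.mapRingHom (algebraMap _ _)).comp (radialSubst : _ →ₐ[k] _).toRingHom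

theorem genericRadial_apply (p : MvPolynomial σ k) :
    genericRadial p = (radialSubst p).map (algebraMap _ _) :=
  rfl

theorem genericRadial_injective : Function.Injective (genericRadial (k := k) (σ := σ)) :=
  (Polynomial.map_injective _ (IsFractionRing.injective _ _)).comp radialSubst_injective

theorem genericRadial_C (a : k) :
    genericRadial (σ := σ) (C a) = Polynomial.C (algebraMap k _ a) := by
  rw [genericRadial_apply, radialSubst_C, Polynomial.map_C, ← algebraMap_eq,
    ← IsScalarTower.algebraMap_apply]

theorem coeff_zero_genericRadial (p : MvPolynomial σ k) :
    (genericRadial p).coeff 0 = algebraMap k _ (constantCoeff p) := by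
  rw [genericRadial_apply, Polynomial.coeff_map, coeff_zero_radialSubst, ← algebraMap_eq,
    ← IsScalarTower.algebraMap_apply]

theorem irreducible_genericRadial [IsAlgClosed k] {p : MvPolynomial σ k} (hp : Irreducible p)
    (hp₀ : constantCoeff p ≠ 0) : Irreducible (genericRadial p) :=
  have h := irreducible_radialSubst hp hp₀
  have hprim := h.isPrimitive (natDegree_radialSubst_ne_zero hp)
  hprim.irreducible_iff_irreducible_map_fraction_map.1 h

theorem isCoprime_genericRadial [IsAlgClosed k] {p q : MvPolynomial σ k} (hp : Irreducible p)
    (hp₀ : constantCoeff p ≠ 0) (hpq : ¬ p ∣ q) :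
    IsCoprime (genericRadial p) (genericRadial q) := by
  rw [(irreducible_genericRadial hp hp₀).coprime_iff_not_dvd]
  intro hdvd
  have hprim := (irreducible_radialSubst hp hp₀).isPrimitive (natDegree_radialSubst_ne_zero hp)
  have hdvd' := hprim.dvd_of_fraction_map_dvd_fraction_map (q := radialSubst q) hdvd
  have := Polynomial.eval_dvd (x := 1) hdvd'
  rw [eval_one_radialSubst, eval_one_radialSubst] at this
  exact hpq this

end RadialSubstitution

/-! ### Trinomial relations in polynomial rings -/

section Trinomial

theorem isUnit_aeval_of_forall_natDegree_eq_zero {K σ : Type*} [Field K] {u : σ → Polynomial K}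
    (hu : ∀ i, (u i).natDegree = 0) {P : MvPolynomial σ ℤ} (hP : aeval u P ≠ 0) :
    IsUnit (aeval u P) := by
  choose a ha using fun i ↦ Polynomial.natDegree_eq_zero.1 (hu i)
  obtain rfl := funext ha
  rw [← map_aeval_int Polynomial.C] at hP ⊢
  exact ((map_ne_zero_iff _ Polynomial.C_injective).1 hP).isUnit.map _

theorem natDegree_eq_zero_of_isUnit_pow_sub_C_mul_pow {K : Type*} [Field K] {n : ℕ} (hn : n ≠ 0)
    {r r' : K} (hr : r ≠ r') {p q : Polynomial K} (h : IsUnit (p ^ n - Polynomial.C r * q ^ n))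
    (h' : IsUnit (p ^ n - Polynomial.C r' * q ^ n)) : p.natDegree = 0 ∧ q.natDegree = 0 := by
  obtain ⟨c, -, hc⟩ := Polynomial.isUnit_iff.1 h
  obtain ⟨c', -, hc'⟩ := Polynomial.isUnit_iff.1 h'
  have hdiff : Polynomial.C (r' - r)⁻¹ * Polynomial.C (r' - r) = 1 := by
    rw [← Polynomial.C_mul, inv_mul_cancel₀ (sub_ne_zero.2 hr.symm), Polynomial.C_1]
  have hq : q ^ n = Polynomial.C ((r' - r)⁻¹ * (c - c')) := by
    rw [Polynomial.C_mul, Polynomial.C_sub, hc, hc']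
    rw [Polynomial.C_sub] at hdiff
    linear_combination -q ^ n * hdiff
  have hp : p ^ n = Polynomial.C (c + r * ((r' - r)⁻¹ * (c - c'))) := by
    rw [Polynomial.C_add, Polynomial.C_mul, ← hq, hc]
    ring
  have hdeg {f : Polynomial K} {a : K} (hf : f ^ n = Polynomial.C a) : f.natDegree = 0 := by
    simpa [hn] using congrArg Polynomial.natDegree hf
  exact ⟨hdeg hp, hdeg hq⟩

theorem not_irreducible_aeval_vertexForm {K : Type*} [Field K] [CharZero K] {e : K}
    (he : e ^ 2 = 125) (u : Fin 2 → Polynomial K) : ¬ Irreducible (aeval u vertexForm) := by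
  intro h
  let r : K := (-11 + e) / 2
  let r' : K := (-11 - e) / 2
  have hr : r ≠ r' := by
    intro hrr
    obtain rfl : e = 0 := by linear_combination hrr
    norm_num at he
  have hfactor : aeval u vertexForm = u 0 * u 1 *
      ((u 0 ^ 5 - Polynomial.C r * u 1 ^ 5) * (u 0 ^ 5 - Polynomial.C r' * u 1 ^ 5)) := by
    have hsum : Polynomial.C r + Polynomial.C r' = -11 := by
      rw [← Polynomial.C_add, show r + r' = -11 by ring, map_neg, map_ofNat]
    have hprod : Polynomial.C r * Polynomial.C r' = -1 := by
      rw [← Polynomial.C_mul, show r * r' = -1 by linear_combination (-1 / 4) * he, map_neg,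
        map_one]
    simp only [vertexForm, map_mul, map_add, map_sub, map_pow, aeval_X, map_ofNat]
    linear_combination u 0 * u 1 * (u 0 ^ 5 * u 1 ^ 5 * hsum - u 1 ^ 10 * hprod)
  refine h.not_isUnit (isUnit_aeval_of_forall_natDegree_eq_zero (Fin.forall_fin_two.2 ?_) h.ne_zero)
  rcases h.isUnit_or_isUnit hfactor with hunit | hunit <;> rw [IsUnit.mul_iff] at hunit
  · exact ⟨Polynomial.natDegree_eq_zero_of_isUnit hunit.1,
      Polynomial.natDegree_eq_zero_of_isUnit hunit.2⟩
  · exact natDegree_eq_zero_of_isUnit_pow_sub_C_mul_pow (by norm_num) hr hunit.1 hunit.2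

theorem dvd_of_sq_add_cube_eq [IsAlgClosed k] [CharZero k] {σ : Type*} {x y z : MvPolynomial σ k}
    (hz : Irreducible z) (hx₀ : constantCoeff x ≠ 0) (hy₀ : constantCoeff y ≠ 0)
    (hz₀ : constantCoeff z ≠ 0) (hrel : x ^ 2 + y ^ 3 = 1728 * z ^ 5) : z ∣ y := by
  by_contra hzy
  let K := FractionRing (MvPolynomial σ k)
  have : CharZero K := charZero_of_injective_algebraMap (algebraMap k K).injective
  have hrel' : genericRadial x ^ 2 + genericRadial y ^ 3 = 1728 * genericRadial z ^ 5 := by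
    simpa only [map_add, map_mul, map_pow, map_ofNat] using congrArg genericRadial hrel
  obtain ⟨u, hu⟩ := exists_polynomial_aeval_vertexForm_eq hrel'
    (isCoprime_genericRadial hz hz₀ hzy) hx₀ hy₀ hz₀ (coeff_zero_genericRadial x)
    (coeff_zero_genericRadial y) (coeff_zero_genericRadial z)
  obtain ⟨e, he⟩ := IsAlgClosed.exists_pow_nat_eq (125 : k) two_pos
  refine not_irreducible_aeval_vertexForm (e := algebraMap k K e) ?_ u
    (hu ▸ irreducible_genericRadial hz hz₀)
  rw [← map_pow, he, map_ofNat]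

theorem dvd_of_C_mul_sq_add_C_mul_cube_add_C_mul_pow_five_eq_zero [IsAlgClosed k] [CharZero k]
    {σ : Type*} {x y z : MvPolynomial σ k} (hz : Irreducible z) (hx₀ : constantCoeff x ≠ 0)
    (hy₀ : constantCoeff y ≠ 0) (hz₀ : constantCoeff z ≠ 0) {α β γ : k} (hα : α ≠ 0)
    (hβ : β ≠ 0) (hγ : γ ≠ 0) (hrel : C α * x ^ 2 + C β * y ^ 3 + C γ * z ^ 5 = 0) : z ∣ y := by
  obtain ⟨a, rfl⟩ := IsAlgClosed.exists_pow_nat_eq α two_pos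
  obtain ⟨b, rfl⟩ := IsAlgClosed.exists_pow_nat_eq β three_pos
  obtain ⟨c, hc⟩ := IsAlgClosed.exists_pow_nat_eq (-γ / 1728) (Nat.succ_pos 4)
  obtain rfl : γ = -1728 * c ^ 5 := by rw [hc]; ring
  have ha : a ≠ 0 := by rintro rfl; simp at hα
  have hb : b ≠ 0 := by rintro rfl; simp at hβ
  have hc : c ≠ 0 := by rintro rfl; simp at hγ
  have hunit {d : k} (hd : d ≠ 0) : IsUnit (C d : MvPolynomial σ k) := hd.isUnit.map C
  have hdvd : C c * z ∣ C b * y := by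
    refine dvd_of_sq_add_cube_eq (x := C a * x) ((irreducible_isUnit_mul (hunit hc)).2 hz)
      (by simp [ha, hx₀]) (by simp [hb, hy₀]) (by simp [hc, hz₀]) ?_
    simp only [map_mul, map_neg, map_pow, map_ofNat] at hrel
    linear_combination hrel
  rwa [(hunit hc).mul_left_dvd, (hunit hb).dvd_mul_left] at hdvd

theorem dvd_of_C_mul_pow_add_C_mul_pow_add_C_mul_pow_eq_zero [IsAlgClosed k] [CharZero k]
    {σ : Type*} {x y z : MvPolynomial σ k} (hx : Irreducible x) (hy : y ≠ 0) (hz : z ≠ 0)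
    (hx₀ : constantCoeff x ≠ 0) {α β γ : k} (hα : α ≠ 0) (hβ : β ≠ 0) (hγ : γ ≠ 0)
    {a b c : ℕ} (ha : a ≠ 0) (hb : b ≠ 0) (hc : c ≠ 0)
    (habc : b * c + c * a + a * b ≤ a * b * c)
    (hrel : C α * x ^ a + C β * y ^ b + C γ * z ^ c = 0) : x ∣ y := by
  by_contra hxy
  let K := FractionRing (MvPolynomial σ k)
  have : CharZero K := charZero_of_injective_algebraMap (algebraMap k K).injective
  have hrel' := congrArg genericRadial hrel
  simp only [map_add, map_mul, map_pow, map_zero, genericRadial_C] at hrel'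
  have hne {p : MvPolynomial σ k} (hp : p ≠ 0) : genericRadial p ≠ 0 :=
    (map_ne_zero_iff _ genericRadial_injective).2 hp
  have hK {d : k} (hd : d ≠ 0) : algebraMap k K d ≠ 0 := by simpa using hd
  obtain ⟨hdeg, -⟩ := Polynomial.flt_catalan ha hb hc habc (Nat.cast_ne_zero.2 ha)
    (Nat.cast_ne_zero.2 hb) (Nat.cast_ne_zero.2 hc) (hne hx.ne_zero) (hne hy) (hne hz)
    (isCoprime_genericRadial hx hx₀ hxy) (hK hα) (hK hβ) (hK hγ) hrel'
  exact (irreducible_genericRadial hx hx₀).natDegree_pos.ne' hdeg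

theorem eq_two_three_five_of_coprime {a b c : ℕ} (ha : 2 ≤ a) (hab : a < b) (hbc : b < c)
    (hac : a.Coprime c) (h : a * b * c < b * c + c * a + a * b) : a = 2 ∧ b = 3 ∧ c = 5 := by
  obtain rfl : a = 2 := by
    by_contra ha2
    have : 3 * (b * c) ≤ a * (b * c) := Nat.mul_le_mul_right _ (by omega)
    nlinarith
  obtain rfl : b = 3 := by
    by_contra hb3
    have : 4 * c ≤ b * c := Nat.mul_le_mul_right _ (by omega)
    nlinarith
  have hc4 : c ≠ 4 := by
    rintro rfl
    norm_num at hac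
  omega

/-- The automorphism `X ↦ X + p` of the polynomial ring. -/
noncomputable def translation {σ : Type*} (p : σ → k) : MvPolynomial σ k ≃ₐ[k] MvPolynomial σ k :=
  AlgEquiv.ofAlgHom (aeval fun i ↦ X i + C (p i)) (aeval fun i ↦ X i - C (p i))
    (by ext i; simp [algebraMap_eq]) (by ext i; simp [algebraMap_eq])

theorem constantCoeff_translation {σ : Type*} (p : σ → k) (w : MvPolynomial σ k) :
    constantCoeff (translation p w) = eval p w := by
  suffices h : constantCoeff.comp (translation p).toRingEquiv.toRingHom = eval p from
    RingHom.congr_fun h w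
  refine MvPolynomial.ringHom_ext (fun r ↦ ?_) fun i ↦ ?_ <;> simp [translation]

theorem exists_dvd_of_monotone [IsAlgClosed k] [CharZero k] {σ : Type*}
    {x : Fin 3 → MvPolynomial σ k} (hx : ∀ i, Irreducible (x i))
    (hx₀ : ∀ i, constantCoeff (x i) ≠ 0) {α : Fin 3 → k} (hα : ∀ i, α i ≠ 0) {n : Fin 3 → ℕ}
    (hn : ∀ i, 2 ≤ n i) (hcop : Pairwise fun i j ↦ (n i).Coprime (n j)) (hmono : Monotone n)
    (hrel : ∑ i, C (α i) * x i ^ n i = 0) : ∃ i j, i ≠ j ∧ x i ∣ x j := by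
  have hlt {i j : Fin 3} (hij : i < j) : n i < n j := by
    refine (hmono hij.le).lt_of_ne fun h ↦ ?_
    have hcop' : (n i).Coprime (n j) := hcop hij.ne
    rw [h, Nat.coprime_self] at hcop'
    have := hn j
    omega
  have hn0 (i) : n i ≠ 0 := by have := hn i; omega
  rw [Fin.sum_univ_three] at hrel
  rcases le_or_gt (n 1 * n 2 + n 2 * n 0 + n 0 * n 1) (n 0 * n 1 * n 2) with hhyp | hell
  · exact ⟨0, 1, by decide, dvd_of_C_mul_pow_add_C_mul_pow_add_C_mul_pow_eq_zero (hx 0)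
      (hx 1).ne_zero (hx 2).ne_zero (hx₀ 0) (hα 0) (hα 1) (hα 2) (hn0 0) (hn0 1) (hn0 2) hhyp hrel⟩
  · obtain ⟨h0, h1, h2⟩ := eq_two_three_five_of_coprime (hn 0) (hlt (by decide)) (hlt (by decide))
      (hcop (by decide)) hell
    rw [h0, h1, h2] at hrel
    exact ⟨2, 1, by decide, dvd_of_C_mul_sq_add_C_mul_cube_add_C_mul_pow_five_eq_zero (hx 2)
      (hx₀ 0) (hx₀ 1) (hx₀ 2) (hα 0) (hα 1) (hα 2) hrel⟩

theorem exists_dvd_of_sum_C_mul_pow_eq_zero [IsAlgClosed k] [CharZero k] {σ : Type*}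
    {x : Fin 3 → MvPolynomial σ k} (hx : ∀ i, Irreducible (x i)) {α : Fin 3 → k}
    (hα : ∀ i, α i ≠ 0) {n : Fin 3 → ℕ} (hn : ∀ i, 2 ≤ n i)
    (hcop : Pairwise fun i j ↦ (n i).Coprime (n j)) (hrel : ∑ i, C (α i) * x i ^ n i = 0) :
    ∃ i j, i ≠ j ∧ x i ∣ x j := by
  obtain ⟨p, hp⟩ : ∃ p, eval p (∏ i, x i) ≠ 0 := by
    by_contra! h
    exact Finset.prod_ne_zero_iff.2 (fun i _ ↦ (hx i).ne_zero)
      (MvPolynomial.funext (by simpa using h))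
  rw [map_prod, Finset.prod_ne_zero_iff] at hp
  let π := Tuple.sort n
  obtain ⟨i, j, hij, hdvd⟩ := exists_dvd_of_monotone (x := fun i ↦ translation p (x (π i)))
    (α := fun i ↦ α (π i)) (fun i ↦ (MulEquiv.irreducible_iff (translation p)).2 (hx _))
    (fun i ↦ by rw [constantCoeff_translation]; exact hp _ (Finset.mem_univ _)) (fun i ↦ hα _)
    (fun i ↦ hn _) (fun i j hij ↦ hcop (π.injective.ne hij)) (Tuple.monotone_sort n) (by
      have hsum := congrArg (translation p) ((Equiv.sum_comp π _).trans hrel)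
      have hC (a : k) : translation p (C a : MvPolynomial σ k) = C a := by
        rw [← algebraMap_eq, AlgEquiv.commutes]
      simpa only [map_sum, map_mul, map_pow, map_zero, hC] using hsum)
  exact ⟨π i, π j, π.injective.ne hij, (map_dvd_iff (translation p)).1 hdvd⟩

end Trinomial

/-! ### Factorially closed subalgebras -/

/-- A subalgebra containing every factor of each of its nonzero elements. -/
def IsFactoriallyClosed {R B : Type*} [CommRing R] [CommRing B] [Algebra R B]
    (A : Subalgebra R B) : Prop :=
  ∀ r s : B, r ≠ 0 → s ≠ 0 → r * s ∈ A → r ∈ A ∧ s ∈ A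

namespace IsFactoriallyClosed

variable {R B : Type*} [CommRing R] [CommRing B] [Algebra R B] {A : Subalgebra R B}

theorem exists_coe_eq (hA : IsFactoriallyClosed A) {r s : B} {a : A} (ha : a ≠ 0)
    (h : (a : B) = r * s) : ∃ b c : A, (b : B) = r ∧ (c : B) = s ∧ a = b * c := by
  have hrs : r * s ≠ 0 := h ▸ (ZeroMemClass.coe_eq_zero.not.2 ha)
  obtain ⟨hr, hs⟩ := hA r s (left_ne_zero_of_mul hrs) (right_ne_zero_of_mul hrs) (h ▸ a.2)
  exact ⟨⟨r, hr⟩, ⟨s, hs⟩, rfl, rfl, Subtype.ext h⟩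

theorem dvd_of_coe_dvd_coe (hA : IsFactoriallyClosed A) {a b : A} (hb : b ≠ 0)
    (h : (a : B) ∣ b) : a ∣ b := by
  obtain ⟨s, hs⟩ := h
  obtain ⟨a', c, ha', -, rfl⟩ := hA.exists_coe_eq hb hs
  exact Subtype.ext ha' ▸ dvd_mul_right a' c

theorem irreducible_coe (hA : IsFactoriallyClosed A) {a : A} (ha : Irreducible a) :
    Irreducible (a : B) where
  not_isUnit hu := by
    have : Nontrivial A := ⟨a, 0, ha.ne_zero⟩
    exact ha.not_isUnit (isUnit_of_dvd_one (hA.dvd_of_coe_dvd_coe one_ne_zero hu.dvd))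
  isUnit_or_isUnit r s h := by
    obtain ⟨b, c, rfl, rfl, rfl⟩ := hA.exists_coe_eq ha.ne_zero h
    exact (ha.isUnit_or_isUnit rfl).imp (·.map A.val) (·.map A.val)

end IsFactoriallyClosed

/-! ### Trinomial rings -/

section PlaneDet

/-- The determinant of two vectors of the plane `k²`, linear in the second one. -/
def planeDet (v : k × k) : k × k →ₗ[k] k :=
  v.1 • LinearMap.snd k k k - v.2 • LinearMap.fst k k k

theorem planeDet_apply (v w : k × k) : planeDet v w = v.1 * w.2 - v.2 * w.1 := rfl

theorem planeDet_self (v : k × k) : planeDet v v = 0 := by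
  rw [planeDet_apply]
  ring

theorem planeDet_swap (v w : k × k) : planeDet w v = -planeDet v w := by
  simp only [planeDet_apply]
  ring

theorem planeDet_cyclic (u v w : k × k) :
    planeDet v w • u + planeDet w u • v + planeDet u v • w = 0 := by
  ext <;> simp only [planeDet_apply, Prod.fst_add, Prod.snd_add, Prod.smul_fst, Prod.smul_snd,
    smul_eq_mul, Prod.fst_zero, Prod.snd_zero] <;> ring

variable {M : Type*} [AddCommGroup M] [Module k M] {v w : k × k}

theorem exists_linearMap_eq_of_planeDet_ne_zero (h : planeDet v w ≠ 0) (a b : M) :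
    ∃ L : k × k →ₗ[k] M, L v = a ∧ L w = b := by
  refine ⟨(planeDet v w)⁻¹ • ((planeDet v).smulRight b - (planeDet w).smulRight a), ?_, ?_⟩
  · simp [planeDet_self, planeDet_swap v w, smul_smul, h]
  · simp [planeDet_self, smul_smul, h]

theorem linearMap_ext_of_planeDet_ne_zero (h : planeDet v w ≠ 0) {L L' : k × k →ₗ[k] M}
    (hv : L v = L' v) (hw : L w = L' w) : L = L' := by
  refine LinearMap.ext fun u ↦ smul_right_injective M h ?_
  have hu : planeDet v w • u = -(planeDet w u • v + planeDet u v • w) :=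
    eq_neg_of_add_eq_zero_left (by rw [← add_assoc, planeDet_cyclic])
  change planeDet v w • L u = planeDet v w • L' u
  rw [← map_smul, ← map_smul, hu]
  simp only [map_neg, map_add, map_smul, hv, hw]

end PlaneDet

theorem exists_embedding_fin_three_or {ι : Type*} [Finite ι] (hι : 2 ≤ Nat.card ι)
    (p : ι → Prop) :
    Nonempty (Fin 3 ↪ {l // p l}) ∨ ∃ i j, i ≠ j ∧ ∀ l, l ≠ i → l ≠ j → ¬ p l := by
  classical
  have := Fintype.ofFinite ι
  rw [Nat.card_eq_fintype_card] at hι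
  refine (le_or_gt 3 (Fintype.card {l // p l})).imp
    (fun h ↦ Function.Embedding.nonempty_of_card_le (by simpa using h)) fun h ↦ ?_
  rw [Fintype.card_subtype, Nat.lt_succ_iff] at h
  obtain ⟨t, hpt, ht⟩ := Finset.exists_superset_card_eq h hι
  obtain ⟨i, j, hij, rfl⟩ := Finset.card_eq_two.1 ht
  refine ⟨i, j, hij, fun l hi hj hl ↦ ?_⟩
  have := hpt (Finset.mem_filter.2 ⟨Finset.mem_univ l, hl⟩)
  simp [hi, hj] at this

namespace MoriData

variable (Δ : MoriData k)

/-- The class of the variable `T_l` in `k[Δ]`. -/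
noncomputable def gen (l : Fin (Δ.r + 1)) : Δ.Ring := Ideal.Quotient.mk _ (X l)

/-- The coordinates of `T_l ^ β_l` with respect to `T_0 ^ β_0` and `T_1 ^ β_1`. In these terms the
defining relations of `k[Δ]` become symmetric in the indices: the powers `T_l ^ β_l` are the images
of pairwise independent vectors of `k²` under a linear map. -/
def pencil (l : Fin (Δ.r + 1)) : k × k :=
  if (l : ℕ) = 0 then (1, 0) else if (l : ℕ) = 1 then (0, 1) else (-1, -Δ.lam l)

theorem val_one : ((1 : Fin (Δ.r + 1)) : ℕ) = 1 :=
  (Fin.val_one' _).trans (Nat.mod_eq_of_lt (Nat.succ_lt_succ Δ.one_le_r))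

theorem eq_zero_or_eq_one_or_two_le (l : Fin (Δ.r + 1)) : l = 0 ∨ l = 1 ∨ 2 ≤ (l : ℕ) := by
  simp only [Fin.ext_iff, Fin.val_zero, Δ.val_one]
  omega

theorem pencil_zero : Δ.pencil 0 = (1, 0) := if_pos rfl

theorem pencil_one : Δ.pencil 1 = (0, 1) := by
  simp only [pencil, Δ.val_one, one_ne_zero, if_false, if_true]

variable {Δ}

theorem pencil_of_two_le {l : Fin (Δ.r + 1)} (hl : 2 ≤ (l : ℕ)) :
    Δ.pencil l = (-1, -Δ.lam l) := by
  rw [pencil, if_neg (by omega), if_neg (by omega)]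

theorem planeDet_pencil_ne_zero {i j : Fin (Δ.r + 1)} (hij : i ≠ j) :
    planeDet (Δ.pencil i) (Δ.pencil j) ≠ 0 := by
  rw [planeDet_apply]
  rcases Δ.eq_zero_or_eq_one_or_two_le i with rfl | rfl | hi <;>
    rcases Δ.eq_zero_or_eq_one_or_two_le j with rfl | rfl | hj
  · exact absurd rfl hij
  · simp [pencil_zero, pencil_one]
  · simp [pencil_zero, pencil_of_two_le hj, Δ.lam_ne_zero j hj]
  · simp [pencil_zero, pencil_one]
  · exact absurd rfl hij
  · simp [pencil_one, pencil_of_two_le hj]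
  · simp [pencil_zero, pencil_of_two_le hi, Δ.lam_ne_zero i hi]
  · simp [pencil_one, pencil_of_two_le hi]
  · rw [pencil_of_two_le hi, pencil_of_two_le hj]
    exact fun h ↦ hij (Δ.lam_injOn i j hi hj (by linear_combination -h))

variable (Δ)

/-- The linear map `k² → k[Δ]` sending the standard basis to `T_0 ^ β_0` and `T_1 ^ β_1`. -/
noncomputable def pencilMap : k × k →ₗ[k] Δ.Ring :=
  (LinearMap.toSpanSingleton k _ (Δ.gen 0 ^ Δ.β 0)).coprod
    (LinearMap.toSpanSingleton k _ (Δ.gen 1 ^ Δ.β 1))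

theorem gen_relation {l : Fin (Δ.r + 1)} (hl : 2 ≤ (l : ℕ)) :
    Δ.gen 0 ^ Δ.β 0 + Δ.lam l • Δ.gen 1 ^ Δ.β 1 + Δ.gen l ^ Δ.β l = 0 := by
  refine Ideal.Quotient.eq_zero_iff_mem.2 (Ideal.subset_span ⟨l, hl, ?_⟩)
  simp only [smul_eq_C_mul]

theorem gen_pow (l : Fin (Δ.r + 1)) : Δ.gen l ^ Δ.β l = Δ.pencilMap (Δ.pencil l) := by
  rcases Δ.eq_zero_or_eq_one_or_two_le l with rfl | rfl | hl
  · simp [pencilMap, pencil_zero]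
  · simp [pencilMap, pencil_one]
  · simp only [pencilMap, pencil_of_two_le hl, LinearMap.coprod_apply,
      LinearMap.toSpanSingleton_apply, neg_smul, one_smul]
    linear_combination Δ.gen_relation hl

theorem exists_sum_smul_gen_pow_eq_zero {e : Fin 3 → Fin (Δ.r + 1)}
    (he : Function.Injective e) :
    ∃ α : Fin 3 → k, (∀ i, α i ≠ 0) ∧ ∑ i, α i • Δ.gen (e i) ^ Δ.β (e i) = 0 := by
  let d (i j : Fin 3) : k := planeDet (Δ.pencil (e i)) (Δ.pencil (e j))
  have hd {i j : Fin 3} (hij : i ≠ j) : d i j ≠ 0 := planeDet_pencil_ne_zero (he.ne hij)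
  refine ⟨![d 1 2, d 2 0, d 0 1], fun i ↦ by fin_cases i <;> exact hd (by decide), ?_⟩
  have h := congrArg Δ.pencilMap
    (planeDet_cyclic (Δ.pencil (e 0)) (Δ.pencil (e 1)) (Δ.pencil (e 2)))
  simp only [map_add, map_smul, map_zero, ← gen_pow] at h
  exact (Fin.sum_univ_three _).trans h

section Lift

variable {S : Type*} [CommRing S] [Algebra k S]

/-- The universal property of `k[Δ]`: elements `t l` whose powers `t l ^ β_l` depend linearly on the
vectors `pencil l` define a homomorphism. -/
noncomputable def lift (t : Fin (Δ.r + 1) → S) (L : k × k →ₗ[k] S)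
    (h : ∀ l, t l ^ Δ.β l = L (Δ.pencil l)) : Δ.Ring →ₐ[k] S :=
  Ideal.Quotient.liftₐ _ (aeval t) fun a ha ↦ by
    suffices hle : Ideal.span _ ≤ RingHom.ker (aeval (R := k) t) from hle ha
    rw [Ideal.span_le]
    rintro _ ⟨i, hi, rfl⟩
    have hsum : Δ.pencil 0 + Δ.lam i • Δ.pencil 1 + Δ.pencil i = 0 := by
      simp [pencil_zero, pencil_one, pencil_of_two_le hi]
    have := congrArg L hsum
    rw [map_add, map_add, map_smul, map_zero] at this
    simpa [h, Algebra.smul_def] using this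

@[simp]
theorem lift_gen (t : Fin (Δ.r + 1) → S) (L : k × k →ₗ[k] S) (h) (l : Fin (Δ.r + 1)) :
    Δ.lift t L h (Δ.gen l) = t l :=
  (Ideal.Quotient.lift_mk _ _ _).trans (aeval_X t l)

variable {Δ}

theorem algHom_ext {f g : Δ.Ring →ₐ[k] S} (h : ∀ l, f (Δ.gen l) = g (Δ.gen l)) : f = g :=
  Ideal.Quotient.algHom_ext _ (MvPolynomial.algHom_ext h)

end Lift

theorem induction_on_gen {P : Δ.Ring → Prop} (x : Δ.Ring) (algebraMap : ∀ c, P (algebraMap k _ c))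
    (add : ∀ x y, P x → P y → P (x + y)) (mul_gen : ∀ x l, P x → P (x * Δ.gen l)) : P x := by
  obtain ⟨p, rfl⟩ := Ideal.Quotient.mk_surjective x
  induction p using MvPolynomial.induction_on with
  | C a => exact algebraMap a
  | add p q hp hq => exact add _ _ hp hq
  | mul_X p l hp => exact mul_gen _ l hp

theorem nonempty_algEquiv_of_forall_β_eq_one {i j : Fin (Δ.r + 1)} (hij : i ≠ j)
    (h : ∀ l, l ≠ i → l ≠ j → Δ.β l = 1) :
    Nonempty (Δ.Ring ≃ₐ[k] MvPolynomial (Fin 2) k) := by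
  obtain ⟨L, hLi, hLj⟩ := exists_linearMap_eq_of_planeDet_ne_zero
    (planeDet_pencil_ne_zero hij) (X 0 ^ Δ.β i : MvPolynomial (Fin 2) k) (X 1 ^ Δ.β j)
  let t (l : Fin (Δ.r + 1)) : MvPolynomial (Fin 2) k :=
    if l = i then X 0 else if l = j then X 1 else L (Δ.pencil l)
  have hti : t i = X 0 := if_pos rfl
  have htj : t j = X 1 := by simp only [t, hij.symm, if_false, if_true]
  have htl {l} (hi : l ≠ i) (hj : l ≠ j) : t l = L (Δ.pencil l) := by
    simp only [t, hi, hj, if_false]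
  have ht (l) : t l ^ Δ.β l = L (Δ.pencil l) := by
    rcases eq_or_ne l i with rfl | hi
    · rw [hti, hLi]
    rcases eq_or_ne l j with rfl | hj
    · rw [htj, hLj]
    rw [htl hi hj, h l hi hj, pow_one]
  let G : MvPolynomial (Fin 2) k →ₐ[k] Δ.Ring := aeval ![Δ.gen i, Δ.gen j]
  have hGL : G.toLinearMap ∘ₗ L = Δ.pencilMap :=
    linearMap_ext_of_planeDet_ne_zero (planeDet_pencil_ne_zero hij)
      (by simp [hLi, G, gen_pow]) (by simp [hLj, G, gen_pow])
  refine ⟨AlgEquiv.ofAlgHom (Δ.lift t L ht) G (MvPolynomial.algHom_ext fun a ↦ ?_)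
    (algHom_ext fun l ↦ ?_)⟩
  · fin_cases a <;> simp [G, hti, htj]
  · rcases eq_or_ne l i with rfl | hi
    · simp [G, hti]
    rcases eq_or_ne l j with rfl | hj
    · simp [G, htj]
    have := LinearMap.congr_fun hGL (Δ.pencil l)
    simpa [htl hi hj, ← gen_pow, h l hi hj] using this

section Points

variable [IsAlgClosed k]

theorem exists_algHom_gen_pow (L : k × k →ₗ[k] k) :
    ∃ f : Δ.Ring →ₐ[k] k, ∀ l, f (Δ.gen l) ^ Δ.β l = L (Δ.pencil l) := by
  choose t ht using fun l ↦ IsAlgClosed.exists_pow_nat_eq (L (Δ.pencil l)) (Δ.β_pos l)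
  exact ⟨Δ.lift t L ht, by simpa using ht⟩

theorem not_gen_dvd_gen {i j : Fin (Δ.r + 1)} (hij : i ≠ j) : ¬ Δ.gen i ∣ Δ.gen j := by
  intro hdvd
  obtain ⟨f, hf⟩ := Δ.exists_algHom_gen_pow (planeDet (Δ.pencil i))
  have hi : f (Δ.gen i) = 0 := by
    rw [← pow_eq_zero_iff (Δ.β_pos i).ne', hf, planeDet_self]
  have hj : f (Δ.gen j) = 0 := zero_dvd_iff.1 (hi ▸ map_dvd f hdvd)
  exact planeDet_pencil_ne_zero hij (by rw [← hf, hj, zero_pow (Δ.β_pos j).ne'])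

theorem gen_ne_zero (i : Fin (Δ.r + 1)) : Δ.gen i ≠ 0 := by
  have : Nontrivial (Fin (Δ.r + 1)) := Fin.nontrivial_iff_two_le.2 (Nat.succ_le_succ Δ.one_le_r)
  obtain ⟨j, hj⟩ := exists_ne i
  exact fun h ↦ Δ.not_gen_dvd_gen hj (h ▸ dvd_zero _)

end Points

section Grading

/-- The weight of `T_l` in the grading of `k[Δ]` that makes all powers `T_l ^ β_l` homogeneous of
degree `∏ β_j`. -/
def weight (l : Fin (Δ.r + 1)) : ℕ := ∏ j ∈ Finset.univ.erase l, Δ.β j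

theorem weight_mul_β (l : Fin (Δ.r + 1)) : Δ.weight l * Δ.β l = ∏ j, Δ.β j :=
  Finset.prod_erase_mul _ _ (Finset.mem_univ l)

theorem weight_ne_zero (l : Fin (Δ.r + 1)) : Δ.weight l ≠ 0 :=
  Finset.prod_ne_zero_iff.2 fun j _ ↦ (Δ.β_pos j).ne'

theorem β_dvd_weight {i l : Fin (Δ.r + 1)} (h : i ≠ l) : Δ.β i ∣ Δ.weight l :=
  Finset.dvd_prod_of_mem _ (Finset.mem_erase.2 ⟨h, Finset.mem_univ _⟩)

theorem coprime_β_weight (i : Fin (Δ.r + 1)) : (Δ.β i).Coprime (Δ.weight i) :=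
  Nat.Coprime.prod_right fun j hj ↦ Δ.coprime i j (Finset.ne_of_mem_erase hj).symm

/-- The coaction `T_l ↦ T_l s ^ weight l` of the weight grading. The degree in `s` of the image of
an element is its weighted degree. -/
noncomputable def coaction : Δ.Ring →ₐ[k] Polynomial Δ.Ring :=
  Δ.lift (fun l ↦ Polynomial.monomial (Δ.weight l) (Δ.gen l))
    ((Polynomial.monomial (∏ j, Δ.β j)).restrictScalars k ∘ₗ Δ.pencilMap) fun l ↦ by
      rw [Polynomial.monomial_pow, weight_mul_β, gen_pow]
      rfl

theorem coaction_gen (l : Fin (Δ.r + 1)) :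
    Δ.coaction (Δ.gen l) = Polynomial.monomial (Δ.weight l) (Δ.gen l) := lift_gen ..

/-- The augmentation of `k[Δ]`, evaluation at the origin. -/
noncomputable def augmentation : Δ.Ring →ₐ[k] k :=
  Δ.lift 0 0 fun l ↦ by simp [(Δ.β_pos l).ne']

theorem augmentation_gen (l : Fin (Δ.r + 1)) : Δ.augmentation (Δ.gen l) = 0 := lift_gen ..

theorem eval_one_coaction (x : Δ.Ring) : (Δ.coaction x).eval 1 = x := by
  have h : ((Polynomial.aeval 1).restrictScalars k).comp Δ.coaction = AlgHom.id k Δ.Ring :=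
    algHom_ext fun l ↦ by simp [coaction_gen]
  simpa [Polynomial.coe_aeval_eq_eval] using DFunLike.congr_fun h x

theorem eval_zero_coaction (x : Δ.Ring) :
    (Δ.coaction x).eval 0 = algebraMap k Δ.Ring (Δ.augmentation x) := by
  have h : ((Polynomial.aeval 0).restrictScalars k).comp Δ.coaction =
      (Algebra.ofId k Δ.Ring).comp Δ.augmentation :=
    algHom_ext fun l ↦ by simp [coaction_gen, augmentation_gen, Δ.weight_ne_zero]
  simpa [Polynomial.coe_aeval_eq_eval] using DFunLike.congr_fun h x

theorem β_dvd_or_weight_le_of_coeff_coaction_ne_zero (i : Fin (Δ.r + 1)) (x : Δ.Ring) :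
    ∀ n, (Δ.coaction x).coeff n ≠ 0 → Δ.β i ∣ n ∨ Δ.weight i ≤ n := by
  induction x using induction_on_gen with
  | algebraMap c =>
    intro n hn
    rw [AlgHom.commutes, Polynomial.algebraMap_apply, Polynomial.coeff_C] at hn
    exact .inl ((ite_ne_right_iff.1 hn).1 ▸ dvd_zero _)
  | add x y hx hy =>
    intro n hn
    rw [map_add, Polynomial.coeff_add] at hn
    by_cases hxn : (Δ.coaction x).coeff n = 0
    · exact hy n (by rwa [hxn, zero_add] at hn)
    · exact hx n hxn
  | mul_gen x l hx =>
    intro n hn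
    rw [map_mul, coaction_gen, ← Polynomial.C_mul_X_pow_eq_monomial, ← mul_assoc,
      Polynomial.coeff_mul_X_pow', Polynomial.coeff_mul_C, ite_ne_right_iff] at hn
    obtain ⟨hle, hn⟩ := hn
    rcases eq_or_ne i l with rfl | hil
    · exact .inr hle
    rcases hx _ (left_ne_zero_of_mul hn) with hdvd | hge
    · exact .inl ((Nat.dvd_sub_iff_left hle (Δ.β_dvd_weight hil)).1 hdvd)
    · exact .inr (hge.trans (Nat.sub_le _ _))

theorem β_dvd_or_weight_le_natDegree_coaction (i : Fin (Δ.r + 1)) {x : Δ.Ring}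
    (hx : Δ.coaction x ≠ 0) :
    Δ.β i ∣ (Δ.coaction x).natDegree ∨ Δ.weight i ≤ (Δ.coaction x).natDegree :=
  Δ.β_dvd_or_weight_le_of_coeff_coaction_ne_zero i x _ (Polynomial.leadingCoeff_ne_zero.2 hx)

variable {Δ}

theorem isUnit_of_natDegree_coaction_eq_zero {x : Δ.Ring} (hx : x ≠ 0)
    (h : (Δ.coaction x).natDegree = 0) : IsUnit x := by
  obtain ⟨c, hc⟩ := Polynomial.natDegree_eq_zero.1 h
  have hxc : x = algebraMap k Δ.Ring (Δ.augmentation x) := by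
    rw [← eval_zero_coaction, ← hc, Polynomial.eval_C, ← Δ.eval_one_coaction x, ← hc,
      Polynomial.eval_C]
  rw [hxc] at hx ⊢
  exact (IsUnit.mk0 _ fun h0 ↦ hx (by rw [h0, map_zero])).map _

/- The factors of `T_i` are homogeneous, and one of degree less than `weight i` only involves the
other generators, so `β_i` divides its degree. As it does not divide `weight i`, one factor has
degree `0`. -/
theorem irreducible_gen [IsAlgClosed k] [IsDomain Δ.Ring] {i : Fin (Δ.r + 1)} (hi : 2 ≤ Δ.β i) :
    Irreducible (Δ.gen i) where
  not_isUnit hu := not_isUnit_zero (Δ.augmentation_gen i ▸ hu.map Δ.augmentation)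
  isUnit_or_isUnit x y hxy := by
    have hne : x * y ≠ 0 := hxy ▸ Δ.gen_ne_zero i
    have hmul : Δ.coaction x * Δ.coaction y = Polynomial.monomial (Δ.weight i) (Δ.gen i) := by
      rw [← map_mul, ← hxy, coaction_gen]
    have hmul_ne : Δ.coaction x * Δ.coaction y ≠ 0 :=
      hmul ▸ (Polynomial.monomial_eq_zero_iff _ _).not.2 (Δ.gen_ne_zero i)
    have hx := left_ne_zero_of_mul hmul_ne
    have hy := right_ne_zero_of_mul hmul_ne
    have hdeg : (Δ.coaction x).natDegree + (Δ.coaction y).natDegree = Δ.weight i := by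
      rw [← Polynomial.natDegree_mul hx hy, hmul,
        Polynomial.natDegree_monomial_eq _ (Δ.gen_ne_zero i)]
    rcases Δ.β_dvd_or_weight_le_natDegree_coaction i hx with hdx | hdx
    · rcases Δ.β_dvd_or_weight_le_natDegree_coaction i hy with hdy | hdy
      · have := (Δ.coprime_β_weight i).eq_one_of_dvd (hdeg ▸ dvd_add hdx hdy)
        omega
      · exact .inl (isUnit_of_natDegree_coaction_eq_zero (left_ne_zero_of_mul hne) (by omega))
    · exact .inr (isUnit_of_natDegree_coaction_eq_zero (right_ne_zero_of_mul hne) (by omega))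

end Grading

variable {Δ}

theorem exists_β_lt_two [IsAlgClosed k] [CharZero k] {σ B : Type*} [CommRing B] [Algebra k B]
    (φ : B ≃ₐ[k] MvPolynomial σ k) {A : Subalgebra k B} (hA : IsFactoriallyClosed A)
    (ψ : A ≃ₐ[k] Δ.Ring) {e : Fin 3 → Fin (Δ.r + 1)} (he : Function.Injective e) :
    ∃ i, Δ.β (e i) < 2 := by
  by_contra! hβ
  have : IsDomain B := φ.toMulEquiv.isDomain _
  have : IsDomain Δ.Ring := ψ.symm.toMulEquiv.isDomain _
  let x (i : Fin 3) : A := ψ.symm (Δ.gen (e i))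
  have hx (i) : Irreducible (φ (x i)) :=
    (MulEquiv.irreducible_iff φ).2 (hA.irreducible_coe
      ((MulEquiv.irreducible_iff ψ.symm).2 (irreducible_gen (hβ i))))
  obtain ⟨α, hα, hsum⟩ := Δ.exists_sum_smul_gen_pow_eq_zero he
  have hrel : ∑ i, C (α i) * φ (x i) ^ Δ.β (e i) = 0 := by
    simpa [x, Algebra.smul_def] using
      congrArg (φ.toAlgHom.comp (A.val.comp ψ.symm.toAlgHom)) hsum
  obtain ⟨i, j, hij, hdvd⟩ := exists_dvd_of_sum_C_mul_pow_eq_zero hx hα hβ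
    (fun i j hij ↦ Δ.coprime _ _ (he.ne hij)) hrel
  have hdvd' : x i ∣ x j := hA.dvd_of_coe_dvd_coe
    (fun h ↦ (hx j).ne_zero (by rw [h, ZeroMemClass.coe_zero, map_zero])) ((map_dvd_iff φ).1 hdvd)
  exact Δ.not_gen_dvd_gen (he.ne hij) ((map_dvd_iff ψ.symm).1 hdvd')

end MoriData

theorem factoriallyClosed_trinomial_subalgebra_of_polynomialRing_general
    [IsAlgClosed k] [CharZero k] (Δ : MoriData k) {σ B : Type*} [CommRing B] [Algebra k B]
    (hB : Nonempty (B ≃ₐ[k] MvPolynomial σ k)) (A : Subalgebra k B)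
    (hfc : IsFactoriallyClosed A) (hA : Nonempty (A ≃ₐ[k] Δ.Ring)) :
    Nonempty (A ≃ₐ[k] MvPolynomial (Fin 2) k) := by
  obtain ⟨φ⟩ := hB
  obtain ⟨ψ⟩ := hA
  have hcard : 2 ≤ Nat.card (Fin (Δ.r + 1)) := by simpa using Δ.one_le_r
  rcases exists_embedding_fin_three_or hcard (2 ≤ Δ.β ·) with ⟨⟨e⟩⟩ | ⟨i, j, hij, h⟩
  · obtain ⟨i, hi⟩ := MoriData.exists_β_lt_two φ hfc ψ (Subtype.val_injective.comp e.injective)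
    exact absurd (e i).2 hi.not_ge
  · obtain ⟨χ⟩ := Δ.nonempty_algEquiv_of_forall_β_eq_one hij fun l hi hj ↦
      le_antisymm (Nat.lt_succ_iff.1 (not_le.1 (h l hi hj))) (Δ.β_pos l)
    exact ⟨ψ.trans χ⟩

/-- Let `k` be algebraically closed of characteristic zero, `Δ` trinomial data
over `k` with unit partition, `B` a `k`-algebra isomorphic to a polynomial ring in `m ≥ 2`
variables, and `A ⊆ B` a factorially closed `k`-subalgebra isomorphic to `k[Δ]`.  Then `A` is
a polynomial ring in two variables over `k`. -/
theorem factoriallyClosed_trinomial_subalgebra_of_polynomialRing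
    [IsAlgClosed k] [CharZero k] (Δ : MoriData k)
    (B : Type*) [CommRing B] [Algebra k B]
    (m : ℕ) (hm : 2 ≤ m) (hB : Nonempty (B ≃ₐ[k] MvPolynomial (Fin m) k))
    (A : Subalgebra k B)
    (hfc : ∀ r s : B, r ≠ 0 → s ≠ 0 → r * s ∈ A → r ∈ A ∧ s ∈ A)
    (hA : Nonempty (A ≃ₐ[k] Δ.Ring)) :
    Nonempty (A ≃ₐ[k] MvPolynomial (Fin 2) k) :=
  factoriallyClosed_trinomial_subalgebra_of_polynomialRing_general Δ hB A hfc hA
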